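/- arXiv:0909.3238 — 7 statements merged into one kernel-verified Lean document; each statement's English description precedes it below -/
import Mathlib

section
/- Let K be a field, A a K-algebra, P = {p₁₂,p₁₁} ⊆ K, τ = {τ₀,τ₁,τ₂} ⊆ K, σ : A → M₂ₓ₂(A) an algebra homomorphism and δ : A → M₂ₓ₁(A) a σ-derivation, and let C = K[y₁][y₂;σ₂,d₂] be the iterated Ore extension with σ₂(y₁) = p₁₂y₁ + τ₂ and d₂(y₁) = p₁₁y₁² + τ₁y₁ + τ₀. Then the following are equivalent: (i) the right double extension A_P[y₁,y₂;σ,δ,τ] exists; (ii) one can extend the multiplications of A and of C to an associative multiplication on the K-vector space A ⊗_K C satisfying y₁a = σ₁₁(a)y₁ + σ₁₂(a)y₂ + δ₁(a) and y₂a = σ₂₁(a)y₁ + σ₂₂(a)y₂ + δ₂(a) for all a ∈ A. -/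
/-!
The iterated Ore extension `C` has the `K`-basis `x₁ⁱ x₂ʲ` (`exists_monomial_basis`), so
`A ⊗ C` is a free left `A`-module on the elements `1 ⊗ x₁ⁱ x₂ʲ`, and in `C` one has
`x₂x₁ = p₁₂x₁x₂ + p₁₁x₁² + τ₁x₁ + τ₂x₂ + τ₀` (`ore_relation`).

If `B` is a right double extension, then `x₁ⁱ x₂ʲ ↦ y₁ⁱ y₂ʲ` defines a linear map `φ : C → B`.
Since `τ ⊆ K`, the elements `y₁, y₂` satisfy the relation of `C` with coefficients in `K`, and
this forces `φ` to be multiplicative (`monomial_map_mul`). The map `a ⊗ c ↦ a φ(c)` is then a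
linear bijection `A ⊗ C → B`, along which the product of `B` is pulled back.

Conversely, a product on `A ⊗ C` as in the theorem makes `A ⊗ C` a right double extension with
`y₁ = 1 ⊗ x₁` and `y₂ = 1 ⊗ x₂`. The universe of a witness must not involve that of `C`, so the
ring is built on an arbitrary module `M` linearly isomorphic to `A ⊗ C` (`witness_of_mul`); in the
end `M` is a lift of `(ℕ × ℕ) →₀ A`.
-/


/-!
Common definitions for formalizing "Double Ore Extensions versus Iterated Ore Extensions"
(Carvalho, Lopes, Matczuk).

We model an extension `B` of a `K`-algebra `A` via an injective algebra map `ι : A →ₐ[K] B`.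
-/

universe u v

section Defs

variable {K : Type*} {A : Type*} {B : Type*} [Field K] [Ring A] [Algebra K A]
  [Ring B] [Algebra K B]

/-- `B` is a right double extension `A_P[y₁,y₂;σ,δ,τ]` of `A` (embedded via `ι`), with
parameter `P = {p₁₂, p₁₁} ⊆ K`, tail `τ = {τ₀,τ₁,τ₂} ⊆ A`,
`σ = [[σ₁₁,σ₁₂],[σ₂₁,σ₂₂]] : A → M₂ₓ₂(A)` and `δ = [δ₁;δ₂] : A → M₂ₓ₁(A)`:
`B` is generated by `A`, `y₁`, `y₂`; the quadratic relation
`y₂y₁ = p₁₂y₁y₂ + p₁₁y₁² + τ₁y₁ + τ₂y₂ + τ₀` holds; `B` is a free left `A`-module with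
basis `{y₁ⁱy₂ʲ}`; and `y₁a = σ₁₁(a)y₁ + σ₁₂(a)y₂ + δ₁(a)`,
`y₂a = σ₂₁(a)y₁ + σ₂₂(a)y₂ + δ₂(a)` for all `a ∈ A`. -/
def IsRightDoubleExtension (ι : A →ₐ[K] B) (y₁ y₂ : B) (p₁₂ p₁₁ : K)
    (τ₀ τ₁ τ₂ : A) (σ₁₁ σ₁₂ σ₂₁ σ₂₂ δ₁ δ₂ : A → A) : Prop :=
  Function.Injective ι ∧
  Algebra.adjoin K (Set.range ι ∪ {y₁, y₂}) = ⊤ ∧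
  y₂ * y₁ = p₁₂ • (y₁ * y₂) + p₁₁ • (y₁ * y₁) + ι τ₁ * y₁ + ι τ₂ * y₂ + ι τ₀ ∧
  (∀ b : B, ∃ f : (ℕ × ℕ) →₀ A, b = f.sum fun ij a => ι a * (y₁ ^ ij.1 * y₂ ^ ij.2)) ∧
  (∀ f : (ℕ × ℕ) →₀ A, (f.sum fun ij a => ι a * (y₁ ^ ij.1 * y₂ ^ ij.2)) = 0 → f = 0) ∧
  (∀ a : A, y₁ * ι a = ι (σ₁₁ a) * y₁ + ι (σ₁₂ a) * y₂ + ι (δ₁ a)) ∧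
  (∀ a : A, y₂ * ι a = ι (σ₂₁ a) * y₁ + ι (σ₂₂ a) * y₂ + ι (δ₂ a))

/-- A right double extension is a double extension if moreover `p₁₂ ≠ 0`, `B` is a free
right `A`-module with basis `{y₂ⁱy₁ʲ}`, and `y₁A + y₂A + A = Ay₁ + Ay₂ + A`. -/
def IsDoubleExtension (ι : A →ₐ[K] B) (y₁ y₂ : B) (p₁₂ p₁₁ : K)
    (τ₀ τ₁ τ₂ : A) (σ₁₁ σ₁₂ σ₂₁ σ₂₂ δ₁ δ₂ : A → A) : Prop :=
  IsRightDoubleExtension ι y₁ y₂ p₁₂ p₁₁ τ₀ τ₁ τ₂ σ₁₁ σ₁₂ σ₂₁ σ₂₂ δ₁ δ₂ ∧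
  p₁₂ ≠ 0 ∧
  (∀ b : B, ∃ f : (ℕ × ℕ) →₀ A, b = f.sum fun ij a => (y₂ ^ ij.1 * y₁ ^ ij.2) * ι a) ∧
  (∀ f : (ℕ × ℕ) →₀ A, (f.sum fun ij a => (y₂ ^ ij.1 * y₁ ^ ij.2) * ι a) = 0 → f = 0) ∧
  {x : B | ∃ a₁ a₂ a₃ : A, x = y₁ * ι a₁ + y₂ * ι a₂ + ι a₃} =
    {x : B | ∃ a₁ a₂ a₃ : A, x = ι a₁ * y₁ + ι a₂ * y₂ + ι a₃}

/-- `B` is an Ore extension `A[y;σ,d]` of `A` (embedded via `ι`): it is a free left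
`A`-module with basis `{yⁱ}` and `y·a = σ(a)y + d(a)` for all `a ∈ A`. -/
def IsOreExtension (ι : A →ₐ[K] B) (y : B) (σ d : A → A) : Prop :=
  Function.Injective ι ∧
  (∀ b : B, ∃ f : ℕ →₀ A, b = f.sum fun i a => ι a * y ^ i) ∧
  (∀ f : ℕ →₀ A, (f.sum fun i a => ι a * y ^ i) = 0 → f = 0) ∧
  (∀ a : A, y * ι a = ι (σ a) * y + ι (d a))

/-- `B` is an iterated Ore extension `A[y₁;σ₁,d₁][y₂;σ₂,d₂]` of `A` (embedded via `ι`):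
the subalgebra `A₁ = A[y₁]` generated by `A` and `y₁` is a free left `A`-module with basis
`{y₁ⁱ}`, with `y₁a = σ₁(a)y₁ + d₁(a)`; and `B` is a free left `A₁`-module with basis
`{y₂ⁱ}`, with `y₂s = σ₂(s)y₂ + d₂(s)` for `s ∈ A₁`, where `σ₂, d₂` preserve `A₁`. -/
def IsIteratedOreExtension (ι : A →ₐ[K] B) (y₁ y₂ : B)
    (σ₁ d₁ : A → A) (σ₂ d₂ : B → B) : Prop :=
  Function.Injective ι ∧
  (∀ b ∈ Algebra.adjoin K (Set.range ι ∪ {y₁}),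
    ∃ f : ℕ →₀ A, b = f.sum fun i a => ι a * y₁ ^ i) ∧
  (∀ f : ℕ →₀ A, (f.sum fun i a => ι a * y₁ ^ i) = 0 → f = 0) ∧
  (∀ a : A, y₁ * ι a = ι (σ₁ a) * y₁ + ι (d₁ a)) ∧
  (∀ b ∈ Algebra.adjoin K (Set.range ι ∪ {y₁}),
    σ₂ b ∈ Algebra.adjoin K (Set.range ι ∪ {y₁}) ∧
      d₂ b ∈ Algebra.adjoin K (Set.range ι ∪ {y₁})) ∧
  (∀ b : B, ∃ g : ℕ →₀ (Algebra.adjoin K (Set.range ι ∪ {y₁})),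
    b = g.sum fun i s => (s : B) * y₂ ^ i) ∧
  (∀ g : ℕ →₀ (Algebra.adjoin K (Set.range ι ∪ {y₁})),
    (g.sum fun i s => (s : B) * y₂ ^ i) = 0 → g = 0) ∧
  (∀ b ∈ Algebra.adjoin K (Set.range ι ∪ {y₁}), y₂ * b = σ₂ b * y₂ + d₂ b)

/-- The components `σᵢⱼ : A → A` constitute an algebra homomorphism
`σ = [[σ₁₁,σ₁₂],[σ₂₁,σ₂₂]] : A → M₂ₓ₂(A)`. -/
def IsSigmaAlgHom (K : Type u) [Field K] {A : Type v} [Ring A] [Algebra K A]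
    (σ₁₁ σ₁₂ σ₂₁ σ₂₂ : A → A) : Prop :=
  σ₁₁ 1 = 1 ∧ σ₁₂ 1 = 0 ∧ σ₂₁ 1 = 0 ∧ σ₂₂ 1 = 1 ∧
  (∀ (k : K) (a b : A),
    σ₁₁ (k • a + b) = k • σ₁₁ a + σ₁₁ b ∧
    σ₁₂ (k • a + b) = k • σ₁₂ a + σ₁₂ b ∧
    σ₂₁ (k • a + b) = k • σ₂₁ a + σ₂₁ b ∧
    σ₂₂ (k • a + b) = k • σ₂₂ a + σ₂₂ b) ∧
  (∀ a b : A,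
    σ₁₁ (a * b) = σ₁₁ a * σ₁₁ b + σ₁₂ a * σ₂₁ b ∧
    σ₁₂ (a * b) = σ₁₁ a * σ₁₂ b + σ₁₂ a * σ₂₂ b ∧
    σ₂₁ (a * b) = σ₂₁ a * σ₁₁ b + σ₂₂ a * σ₂₁ b ∧
    σ₂₂ (a * b) = σ₂₁ a * σ₁₂ b + σ₂₂ a * σ₂₂ b)

/-- `δ = [δ₁;δ₂] : A → M₂ₓ₁(A)` is a `σ`-derivation: `δ` is `K`-linear and
`δ(ab) = σ(a)δ(b) + δ(a)b`. -/
def IsSigmaDerivation (K : Type u) [Field K] {A : Type v} [Ring A] [Algebra K A]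
    (σ₁₁ σ₁₂ σ₂₁ σ₂₂ δ₁ δ₂ : A → A) : Prop :=
  (∀ (k : K) (a b : A),
    δ₁ (k • a + b) = k • δ₁ a + δ₁ b ∧ δ₂ (k • a + b) = k • δ₂ a + δ₂ b) ∧
  (∀ a b : A,
    δ₁ (a * b) = σ₁₁ a * δ₁ b + σ₁₂ a * δ₂ b + δ₁ a * b ∧
    δ₂ (a * b) = σ₂₁ a * δ₁ b + σ₂₂ a * δ₂ b + δ₂ a * b)

end Defs

/-- A witness for the existence of a right double extension of `A` with the given data:
an algebra `B` together with an embedding `ι : A →ₐ[K] B` and elements `y₁, y₂` making `B`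
a right double extension `A_P[y₁,y₂;σ,δ,τ]`. -/
structure RightDoubleExtensionWitness (K : Type u) (A : Type v)
    [Field K] [Ring A] [Algebra K A]
    (p₁₂ p₁₁ : K) (τ₀ τ₁ τ₂ : A) (σ₁₁ σ₁₂ σ₂₁ σ₂₂ δ₁ δ₂ : A → A) :
    Type (max u v + 1) where
  B : Type (max u v)
  [ringB : Ring B]
  [algB : Algebra K B]
  ι : A →ₐ[K] B
  y₁ : B
  y₂ : B
  isRDE : IsRightDoubleExtension ι y₁ y₂ p₁₂ p₁₁ τ₀ τ₁ τ₂ σ₁₁ σ₁₂ σ₂₁ σ₂₂ δ₁ δ₂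

section Helpers

open scoped TensorProduct
open Module

/-- The monomials `x₁ⁱ x₂ʲ` form a `K`-basis of an iterated Ore extension of `K`: it is the
product of the basis `x₁ⁱ` of `K[x₁]` over `K` and the basis `x₂ʲ` of `C` over `K[x₁]`. -/
theorem exists_monomial_basis {K C : Type*} [Field K] [Ring C] [Algebra K C]
    {x₁ x₂ : C} {σ₁ d₁ : K → K} {σc dc : C → C}
    (hC : IsIteratedOreExtension (Algebra.ofId K C) x₁ x₂ σ₁ d₁ σc dc) :
    ∃ b : Basis (ℕ × ℕ) K C, ∀ ij, b ij = x₁ ^ ij.1 * x₂ ^ ij.2 := by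
  obtain ⟨-, hspan, hli, -, -, hspan', hli', -⟩ := hC
  set S := Algebra.adjoin K (Set.range (Algebra.ofId K C) ∪ {x₁}) with hS
  have hx : x₁ ∈ S := Algebra.subset_adjoin (Or.inr rfl)
  let t : S := ⟨x₁, hx⟩
  have ht : ∀ i : ℕ, ((t ^ i : S) : C) = x₁ ^ i := fun i => by simp [t]
  let b₁ : Basis ℕ K S := Basis.mk (v := fun i : ℕ => t ^ i)
    (by
      rw [linearIndependent_iff]
      intro l hl
      apply hli
      have h := congrArg S.val hl
      rw [Finsupp.linearCombination_apply, map_finsuppSum, map_zero] at h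
      rw [← h]
      refine Finsupp.sum_congr fun i _ => ?_
      simp [ht, Algebra.ofId_apply, Algebra.smul_def])
    (by
      rintro ⟨s, hs⟩ -
      obtain ⟨f, hf⟩ := hspan s hs
      rw [Finsupp.mem_span_range_iff_exists_finsupp]
      refine ⟨f, Subtype.ext ?_⟩
      change S.val _ = s
      rw [hf, map_finsuppSum]
      refine Finsupp.sum_congr fun i _ => ?_
      simp [ht, Algebra.ofId_apply, Algebra.smul_def])
  let b₂ : Basis ℕ S C := Basis.mk (v := fun j : ℕ => x₂ ^ j)
    (by
      rw [linearIndependent_iff]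
      intro l hl
      apply hli'
      rw [Finsupp.linearCombination_apply] at hl
      exact hl)
    (by
      rintro c -
      obtain ⟨g, hg⟩ := hspan' c
      rw [Finsupp.mem_span_range_iff_exists_finsupp]
      exact ⟨g, hg.symm⟩)
  refine ⟨b₁.smulTower b₂, fun ij => ?_⟩
  rw [Basis.smulTower_apply, Basis.mk_apply, Basis.mk_apply, Subalgebra.smul_def, smul_eq_mul, ht]

theorem ore_relation {K C : Type*} [Field K] [Ring C] [Algebra K C]
    {p₁₂ p₁₁ τ₀ τ₁ τ₂ : K} {x₁ x₂ : C} {σ₁ d₁ : K → K} {σc dc : C → C}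
    (hC : IsIteratedOreExtension (Algebra.ofId K C) x₁ x₂ σ₁ d₁ σc dc)
    (hσc : σc x₁ = p₁₂ • x₁ + algebraMap K C τ₂)
    (hdc : dc x₁ = p₁₁ • (x₁ * x₁) + τ₁ • x₁ + algebraMap K C τ₀) :
    x₂ * x₁ = p₁₂ • (x₁ * x₂) + p₁₁ • (x₁ * x₁) + τ₁ • x₁ + τ₂ • x₂ + algebraMap K C τ₀ := by
  have h := hC.2.2.2.2.2.2.2 x₁ (Algebra.subset_adjoin (Or.inr rfl))
  rw [h, hσc, hdc, add_mul, smul_mul_assoc, ← Algebra.smul_def]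
  abel

/-- If `y₁, y₂` satisfy the quadratic relation of `x₁, x₂`, then the linear map
`x₁ⁱ x₂ʲ ↦ y₁ⁱ y₂ʲ` is multiplicative. -/
theorem monomial_map_mul {K C B : Type*} [Field K] [Ring C] [Algebra K C] [Ring B] [Algebra K B]
    {p₁₂ p₁₁ τ₀ τ₁ τ₂ : K} {x₁ x₂ : C} {y₁ y₂ : B}
    (hx : x₂ * x₁ =
      p₁₂ • (x₁ * x₂) + p₁₁ • (x₁ * x₁) + τ₁ • x₁ + τ₂ • x₂ + algebraMap K C τ₀)
    (hy : y₂ * y₁ =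
      p₁₂ • (y₁ * y₂) + p₁₁ • (y₁ * y₁) + τ₁ • y₁ + τ₂ • y₂ + algebraMap K B τ₀)
    (b : Basis (ℕ × ℕ) K C) (hb : ∀ ij, b ij = x₁ ^ ij.1 * x₂ ^ ij.2)
    (φ : C →ₗ[K] B) (hφ : ∀ i j : ℕ, φ (x₁ ^ i * x₂ ^ j) = y₁ ^ i * y₂ ^ j) (c c' : C) :
    φ (c * c') = φ c * φ c' := by
  have h₁ : ∀ c, φ (x₁ * c) = y₁ * φ c := by
    intro c
    have : φ ∘ₗ LinearMap.mulLeft K x₁ = LinearMap.mulLeft K y₁ ∘ₗ φ := by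
      refine b.ext fun ij => ?_
      simp only [LinearMap.comp_apply, LinearMap.mulLeft_apply, hb, hφ]
      rw [← mul_assoc, ← pow_succ', hφ, pow_succ', mul_assoc]
    exact LinearMap.congr_fun this c
  -- Commuting `x₂` past `x₁` by the relation gives an induction on the exponent of `x₁`.
  have h₂' : ∀ i j : ℕ, φ (x₂ * (x₁ ^ i * x₂ ^ j)) = y₂ * (y₁ ^ i * y₂ ^ j) := by
    intro i j
    induction i with
    | zero =>
      have h := hφ 0 (j + 1)
      simpa [pow_succ'] using h
    | succ i ih =>
      have e : x₂ * (x₁ ^ (i + 1) * x₂ ^ j) = (x₂ * x₁) * (x₁ ^ i * x₂ ^ j) := by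
        rw [pow_succ']; simp only [mul_assoc]
      have e' : y₂ * (y₁ ^ (i + 1) * y₂ ^ j) = (y₂ * y₁) * (y₁ ^ i * y₂ ^ j) := by
        rw [pow_succ']; simp only [mul_assoc]
      rw [e, e', hx, hy]
      simp only [add_mul, smul_mul_assoc, mul_assoc, map_add, map_smul, h₁, ih,
        ← Algebra.smul_def, hφ]
  have h₂ : ∀ c, φ (x₂ * c) = y₂ * φ c := by
    intro c
    have : φ ∘ₗ LinearMap.mulLeft K x₂ = LinearMap.mulLeft K y₂ ∘ₗ φ := by
      refine b.ext fun ij => ?_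
      simp only [LinearMap.comp_apply, LinearMap.mulLeft_apply, hb, hφ, h₂']
    exact LinearMap.congr_fun this c
  have h₁p : ∀ (i : ℕ) c, φ (x₁ ^ i * c) = y₁ ^ i * φ c := by
    intro i
    induction i with
    | zero => simp
    | succ i ih => intro c; rw [pow_succ', pow_succ', mul_assoc, h₁, ih, mul_assoc]
  have h₂p : ∀ (j : ℕ) c, φ (x₂ ^ j * c) = y₂ ^ j * φ c := by
    intro j
    induction j with
    | zero => simp
    | succ j ih => intro c; rw [pow_succ', pow_succ', mul_assoc, h₂, ih, mul_assoc]
  have : φ ∘ₗ LinearMap.mulRight K c' = LinearMap.mulRight K (φ c') ∘ₗ φ := by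
    refine b.ext fun ij => ?_
    simp only [LinearMap.comp_apply, LinearMap.mulRight_apply, hb, hφ]
    rw [mul_assoc, h₁p, h₂p, mul_assoc]
  exact LinearMap.congr_fun this c

/-- The ring structure on a module given by an associative bilinear product with a unit. -/
abbrev ringOfBilin {K M : Type*} [Field K] [inst : AddCommGroup M] [Module K M]
    (m : M →ₗ[K] M →ₗ[K] M) (e : M) (hassoc : ∀ u v w, m (m u v) w = m u (m v w))
    (hone : ∀ u, m e u = u ∧ m u e = u) : Ring M where
  __ := inst
  mul u v := m u v
  one := e
  mul_assoc := hassoc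
  one_mul u := (hone u).1
  mul_one u := (hone u).2
  left_distrib u v w := map_add (m u) v w
  right_distrib u v w := LinearMap.map_add₂ m u v w
  zero_mul u := LinearMap.map_zero₂ m u
  mul_zero u := map_zero (m u)

/-- The algebra structure accompanying `ringOfBilin`. -/
abbrev algebraOfBilin {K M : Type*} [Field K] [AddCommGroup M] [Module K M]
    (m : M →ₗ[K] M →ₗ[K] M) (e : M) (hassoc : ∀ u v w, m (m u v) w = m u (m v w))
    (hone : ∀ u, m e u = u ∧ m u e = u) :
    letI := ringOfBilin m e hassoc hone
    Algebra K M :=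
  letI := ringOfBilin m e hassoc hone
  Algebra.ofModule (fun r u v => LinearMap.map_smul₂ m r u v) (fun r u v => map_smul (m u) r v)

/-- A `K`-algebra `M` with a linear isomorphism `E : A ⊗ C ≃ M` through which its product extends
those of `A` and `C` is a right double extension as soon as the commutation rules hold. -/
theorem isRightDoubleExtension_of_equiv {K A C M : Type*} [Field K] [Ring A] [Algebra K A]
    [Ring C] [Algebra K C] [Ring M] [Algebra K M]
    {p₁₂ p₁₁ τ₀ τ₁ τ₂ : K} {σ₁₁ σ₁₂ σ₂₁ σ₂₂ δ₁ δ₂ : A → A} {x₁ x₂ : C}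
    (hx : x₂ * x₁ =
      p₁₂ • (x₁ * x₂) + p₁₁ • (x₁ * x₁) + τ₁ • x₁ + τ₂ • x₂ + algebraMap K C τ₀)
    (b : Basis (ℕ × ℕ) K C) (hb : ∀ ij, b ij = x₁ ^ ij.1 * x₂ ^ ij.2)
    (E : A ⊗[K] C ≃ₗ[K] M) (ι : A →ₐ[K] M) (φ : C →ₐ[K] M)
    (hE : ∀ a c, E (a ⊗ₜ c) = ι a * φ c)
    (h₁ : ∀ a : A, φ x₁ * ι a = ι (σ₁₁ a) * φ x₁ + ι (σ₁₂ a) * φ x₂ + ι (δ₁ a))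
    (h₂ : ∀ a : A, φ x₂ * ι a = ι (σ₂₁ a) * φ x₁ + ι (σ₂₂ a) * φ x₂ + ι (δ₂ a)) :
    IsRightDoubleExtension ι (φ x₁) (φ x₂) p₁₂ p₁₁ (algebraMap K A τ₀) (algebraMap K A τ₁)
      (algebraMap K A τ₂) σ₁₁ σ₁₂ σ₂₁ σ₂₂ δ₁ δ₂ := by
  let T := TensorProduct.equivFinsuppOfBasisRight (M := A) b
  have hsum : ∀ f : (ℕ × ℕ) →₀ A,
      (f.sum fun ij a => ι a * (φ x₁ ^ ij.1 * φ x₂ ^ ij.2)) = E (T.symm f) := by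
    intro f
    rw [TensorProduct.equivFinsuppOfBasisRight_symm_apply, map_finsuppSum]
    refine Finsupp.sum_congr fun ij _ => ?_
    rw [hE, hb, map_mul, map_pow, map_pow]
  have hspan : ∀ u : M, ∃ f : (ℕ × ℕ) →₀ A,
      u = f.sum fun ij a => ι a * (φ x₁ ^ ij.1 * φ x₂ ^ ij.2) := fun u =>
    ⟨T (E.symm u), by rw [hsum]; simp⟩
  have hli : ∀ f : (ℕ × ℕ) →₀ A,
      (f.sum fun ij a => ι a * (φ x₁ ^ ij.1 * φ x₂ ^ ij.2)) = 0 → f = 0 := by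
    intro f hf
    rw [hsum] at hf
    simpa using hf
  refine ⟨?_, ?_, ?_, hspan, hli, h₁, h₂⟩
  · rw [injective_iff_map_eq_zero]
    intro a ha
    have h := hli (Finsupp.single (0, 0) a) (by simp [ha])
    simpa using h
  · rw [eq_top_iff]
    rintro u -
    obtain ⟨f, rfl⟩ := hspan u
    have hmem : ∀ z ∈ Set.range ι ∪ {φ x₁, φ x₂},
        z ∈ Algebra.adjoin K (Set.range ι ∪ {φ x₁, φ x₂}) :=
      fun z hz => Algebra.subset_adjoin hz
    refine Subalgebra.sum_mem _ fun ij _ => ?_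
    exact mul_mem (hmem _ (Or.inl ⟨_, rfl⟩))
      (mul_mem (pow_mem (hmem _ (by simp)) _) (pow_mem (hmem _ (by simp)) _))
  · have h := congrArg φ hx
    simpa [Algebra.smul_def] using h

/-- A product on `A ⊗ C` extending those of `A` and `C` and obeying the commutation rules yields
a right double extension, carried by any module `M` in the right universe that is isomorphic to
`A ⊗ C`. -/
theorem witness_of_mul {K : Type u} {A : Type v} {C : Type*} {M : Type (max u v)}
    [Field K] [Ring A] [Algebra K A]
    [Ring C] [Algebra K C] [AddCommGroup M] [Module K M]
    {p₁₂ p₁₁ τ₀ τ₁ τ₂ : K} {σ₁₁ σ₁₂ σ₂₁ σ₂₂ δ₁ δ₂ : A → A} {x₁ x₂ : C}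
    (hx : x₂ * x₁ =
      p₁₂ • (x₁ * x₂) + p₁₁ • (x₁ * x₁) + τ₁ • x₁ + τ₂ • x₂ + algebraMap K C τ₀)
    (b : Basis (ℕ × ℕ) K C) (hb : ∀ ij, b ij = x₁ ^ ij.1 * x₂ ^ ij.2)
    (E : A ⊗[K] C ≃ₗ[K] M)
    (mul : A ⊗[K] C →ₗ[K] A ⊗[K] C →ₗ[K] A ⊗[K] C)
    (hassoc : ∀ u v w : A ⊗[K] C, mul (mul u v) w = mul u (mul v w))
    (hone : ∀ u : A ⊗[K] C, mul ((1 : A) ⊗ₜ[K] (1 : C)) u = u ∧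
      mul u ((1 : A) ⊗ₜ[K] (1 : C)) = u)
    (hA : ∀ a a' : A, mul (a ⊗ₜ[K] (1 : C)) (a' ⊗ₜ[K] (1 : C)) = (a * a') ⊗ₜ[K] (1 : C))
    (hC : ∀ c c' : C, mul ((1 : A) ⊗ₜ[K] c) ((1 : A) ⊗ₜ[K] c') = (1 : A) ⊗ₜ[K] (c * c'))
    (hAC : ∀ (a : A) (c : C), mul (a ⊗ₜ[K] (1 : C)) ((1 : A) ⊗ₜ[K] c) = a ⊗ₜ[K] c)
    (h₁ : ∀ a : A, mul ((1 : A) ⊗ₜ[K] x₁) (a ⊗ₜ[K] (1 : C)) =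
      σ₁₁ a ⊗ₜ[K] x₁ + σ₁₂ a ⊗ₜ[K] x₂ + δ₁ a ⊗ₜ[K] (1 : C))
    (h₂ : ∀ a : A, mul ((1 : A) ⊗ₜ[K] x₂) (a ⊗ₜ[K] (1 : C)) =
      σ₂₁ a ⊗ₜ[K] x₁ + σ₂₂ a ⊗ₜ[K] x₂ + δ₂ a ⊗ₜ[K] (1 : C)) :
    Nonempty (RightDoubleExtensionWitness K A p₁₂ p₁₁
        (algebraMap K A τ₀) (algebraMap K A τ₁) (algebraMap K A τ₂)
        σ₁₁ σ₁₂ σ₂₁ σ₂₂ δ₁ δ₂) := by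
  let m : M →ₗ[K] M →ₗ[K] M :=
    (mul.compl₁₂ E.symm.toLinearMap E.symm.toLinearMap).compr₂ E.toLinearMap
  have hm : ∀ u v : A ⊗[K] C, m (E u) (E v) = E (mul u v) := fun u v => by simp [m]
  have hm_assoc : ∀ u v w, m (m u v) w = m u (m v w) := fun u v w => by simp [m, hassoc]
  have hm_one : ∀ u, m (E (1 ⊗ₜ 1)) u = u ∧ m u (E (1 ⊗ₜ 1)) = u := fun u => by
    simp [m, hone]
  let _ := ringOfBilin m _ hm_assoc hm_one
  let _ := algebraOfBilin m _ hm_assoc hm_one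
  have hmul : ∀ u v : A ⊗[K] C, E u * E v = E (mul u v) := hm
  let ι : A →ₐ[K] M := AlgHom.ofLinearMap
    (E.toLinearMap ∘ₗ (TensorProduct.mk K A C).flip 1) rfl
    (fun a a' => ((hmul _ _).trans (congrArg E (hA a a'))).symm)
  let φ : C →ₐ[K] M := AlgHom.ofLinearMap
    (E.toLinearMap ∘ₗ TensorProduct.mk K A C 1) rfl
    (fun c c' => ((hmul _ _).trans (congrArg E (hC c c'))).symm)
  have hι : ∀ a, ι a = E (a ⊗ₜ 1) := fun _ => rfl
  have hφ : ∀ c, φ c = E (1 ⊗ₜ c) := fun _ => rfl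
  exact ⟨{
    B := M
    ι := ι
    y₁ := φ x₁
    y₂ := φ x₂
    isRDE := isRightDoubleExtension_of_equiv hx b hb E ι φ
      (fun a c => by rw [hι, hφ, hmul, hAC])
      (fun a => by simp only [hι, hφ, hmul, hAC, h₁]; rw [map_add, map_add])
      (fun a => by simp only [hι, hφ, hmul, hAC, h₂]; rw [map_add, map_add]) }⟩

end Helpers

open scoped TensorProduct in
/-- **Proposition (existance).** Given `P = {p₁₂,p₁₁} ⊆ K`, `τ = {τ₀,τ₁,τ₂} ⊆ K`,
an algebra homomorphism `σ : A → M₂ₓ₂(A)` and a `σ`-derivation `δ : A → M₂ₓ₁(A)`,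
let `C = K[y₁][y₂;σ₂,d₂]` be the iterated Ore extension of `K` with
`σ₂(y₁) = p₁₂y₁ + τ₂` and `d₂(y₁) = p₁₁y₁² + τ₁y₁ + τ₀` (so `x₁, x₂ ∈ C` play the roles
of `y₁, y₂` in `C`). Then the following are equivalent:
(i) the right double extension `A_P[y₁,y₂;σ,δ,τ]` exists;
(ii) one can extend the multiplications from `A` and `C` to an associative multiplication
on the `K`-vector space `A ⊗_K C` satisfying `y₁a = σ₁₁(a)y₁ + σ₁₂(a)y₂ + δ₁(a)` and
`y₂a = σ₂₁(a)y₁ + σ₂₂(a)y₂ + δ₂(a)` for all `a ∈ A`. -/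
theorem rightDoubleExtension_exists_iff_mul_on_tensor
    {K A C : Type*} [Field K] [Ring A] [Algebra K A] [Ring C] [Algebra K C]
    (p₁₂ p₁₁ τ₀ τ₁ τ₂ : K) (σ₁₁ σ₁₂ σ₂₁ σ₂₂ δ₁ δ₂ : A → A)
    (hσ : IsSigmaAlgHom K σ₁₁ σ₁₂ σ₂₁ σ₂₂)
    (hδ : IsSigmaDerivation K σ₁₁ σ₁₂ σ₂₁ σ₂₂ δ₁ δ₂)
    (x₁ x₂ : C) (σc dc : C → C)
    (hC : IsIteratedOreExtension (Algebra.ofId K C) x₁ x₂ id (fun _ => 0) σc dc)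
    (hσc : σc x₁ = p₁₂ • x₁ + algebraMap K C τ₂)
    (hdc : dc x₁ = p₁₁ • (x₁ * x₁) + τ₁ • x₁ + algebraMap K C τ₀) :
    Nonempty (RightDoubleExtensionWitness K A p₁₂ p₁₁
        (algebraMap K A τ₀) (algebraMap K A τ₁) (algebraMap K A τ₂)
        σ₁₁ σ₁₂ σ₂₁ σ₂₂ δ₁ δ₂) ↔
      ∃ mul : A ⊗[K] C →ₗ[K] A ⊗[K] C →ₗ[K] A ⊗[K] C,
        (∀ u v w : A ⊗[K] C, mul (mul u v) w = mul u (mul v w)) ∧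
        (∀ u : A ⊗[K] C, mul ((1 : A) ⊗ₜ[K] (1 : C)) u = u ∧
          mul u ((1 : A) ⊗ₜ[K] (1 : C)) = u) ∧
        (∀ a a' : A, mul (a ⊗ₜ[K] (1 : C)) (a' ⊗ₜ[K] (1 : C)) = (a * a') ⊗ₜ[K] (1 : C)) ∧
        (∀ c c' : C, mul ((1 : A) ⊗ₜ[K] c) ((1 : A) ⊗ₜ[K] c') = (1 : A) ⊗ₜ[K] (c * c')) ∧
        (∀ (a : A) (c : C), mul (a ⊗ₜ[K] (1 : C)) ((1 : A) ⊗ₜ[K] c) = a ⊗ₜ[K] c) ∧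
        (∀ a : A, mul ((1 : A) ⊗ₜ[K] x₁) (a ⊗ₜ[K] (1 : C)) =
          σ₁₁ a ⊗ₜ[K] x₁ + σ₁₂ a ⊗ₜ[K] x₂ + δ₁ a ⊗ₜ[K] (1 : C)) ∧
        (∀ a : A, mul ((1 : A) ⊗ₜ[K] x₂) (a ⊗ₜ[K] (1 : C)) =
          σ₂₁ a ⊗ₜ[K] x₁ + σ₂₂ a ⊗ₜ[K] x₂ + δ₂ a ⊗ₜ[K] (1 : C)) := by
  obtain ⟨b, hb⟩ := exists_monomial_basis hC
  have hx := ore_relation hC hσc hdc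
  let T := TensorProduct.equivFinsuppOfBasisRight (M := A) b
  constructor
  · rintro ⟨⟨B, ι, y₁, y₂, -, -, hy, hspan, hli, h₁, h₂⟩⟩
    have hy' : y₂ * y₁ =
        p₁₂ • (y₁ * y₂) + p₁₁ • (y₁ * y₁) + τ₁ • y₁ + τ₂ • y₂ + algebraMap K B τ₀ := by
      simpa [Algebra.smul_def] using hy
    let φ : C →ₗ[K] B := b.constr K fun ij => y₁ ^ ij.1 * y₂ ^ ij.2
    have hφ : ∀ i j : ℕ, φ (x₁ ^ i * x₂ ^ j) = y₁ ^ i * y₂ ^ j := fun i j => by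
      have h := b.constr_basis K (fun ij => y₁ ^ ij.1 * y₂ ^ ij.2) (i, j)
      rwa [hb] at h
    have hφm := monomial_map_mul hx hy' b hb φ hφ
    have hφ1 : φ 1 = 1 := by simpa using hφ 0 0
    have hφx₁ : φ x₁ = y₁ := by simpa using hφ 1 0
    have hφx₂ : φ x₂ = y₂ := by simpa using hφ 0 1
    let Φ : A ⊗[K] C →ₗ[K] B := LinearMap.mul' K B ∘ₗ TensorProduct.map ι.toLinearMap φ
    have hΦ : ∀ a c, Φ (a ⊗ₜ c) = ι a * φ c := fun a c => by simp [Φ]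
    have hsum : ∀ f : (ℕ × ℕ) →₀ A,
        Φ (T.symm f) = f.sum fun ij a => ι a * (y₁ ^ ij.1 * y₂ ^ ij.2) := by
      intro f
      rw [TensorProduct.equivFinsuppOfBasisRight_symm_apply, map_finsuppSum]
      refine Finsupp.sum_congr fun ij _ => ?_
      rw [hΦ, hb, hφ]
    have hbij : Function.Bijective Φ := by
      constructor
      · rw [injective_iff_map_eq_zero]
        intro u hu
        have h := hli (T u) (by rw [← hsum, T.symm_apply_apply, hu])
        simpa using h
      · intro z
        obtain ⟨f, hf⟩ := hspan z
        exact ⟨T.symm f, by rw [hsum, hf]⟩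
    let E : A ⊗[K] C ≃ₗ[K] B := LinearEquiv.ofBijective Φ hbij
    have hE : ∀ a c, E (a ⊗ₜ c) = ι a * φ c := hΦ
    let mul : A ⊗[K] C →ₗ[K] A ⊗[K] C →ₗ[K] A ⊗[K] C :=
      ((LinearMap.mul K B).compl₁₂ E.toLinearMap E.toLinearMap).compr₂ E.symm.toLinearMap
    have hmul : ∀ u v, E (mul u v) = E u * E v := fun u v => by simp [mul]
    refine ⟨mul, fun u v w => ?_, fun u => ⟨?_, ?_⟩, fun a a' => ?_, fun c c' => ?_,
      fun a c => ?_, fun a => ?_, fun a => ?_⟩ <;> apply E.injective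
    · simp only [hmul, mul_assoc]
    · simp only [hmul, hE, map_one, hφ1, one_mul]
    · simp only [hmul, hE, map_one, hφ1, mul_one]
    · simp only [hmul, hE, map_mul, hφ1, mul_one]
    · simp only [hmul, hE, map_one, hφm, one_mul]
    · simp only [hmul, hE, map_one, hφ1, one_mul, mul_one]
    · simp only [hmul, hE, map_add, map_one, hφ1, hφx₁, hφx₂, one_mul, mul_one, h₁]
    · simp only [hmul, hE, map_add, map_one, hφ1, hφx₁, hφx₂, one_mul, mul_one, h₂]
  · rintro ⟨mul, hassoc, hone, hA, hC', hAC, h₁, h₂⟩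
    exact witness_of_mul hx b hb (T.trans ULift.moduleEquiv.symm) mul hassoc hone hA hC' hAC h₁ h₂
end

section
/- Let K be a field and A a K-algebra. A right double extension of A with given data σ, δ, P and τ is unique up to isomorphism: if B and B̄ are both right double extensions A_P[y₁,y₂;σ,δ,τ] of A with the same σ, δ, P, τ, then there is an algebra isomorphism from B to B̄ restricting to the identity on A and mapping y_i ∈ B to the corresponding element y_i ∈ B̄ for i = 1,2. -/
/-!
The two extensions are compared inside the product algebra `B × B'`. The diagonal map
`a ↦ (ι a, ι' a)` and the elements `(y₁, y₁')`, `(y₂, y₂')` satisfy the same relations as in `B` and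
`B'`; let `S` be the subalgebra they generate. The relations alone force `S` to be spanned, as a left
`A`-module, by the ordered monomials `(y₁, y₁')ⁱ (y₂, y₂')ʲ` (`exists_finsupp_of_mem_adjoin`).
The projection `S → B` is onto because `B` is generated by `A, y₁, y₂`, and injective because the
ordered monomials are left `A`-independent in `B`; likewise for `S → B'`. So `B ≃ S ≃ B'`.

The delicate point is the spanning statement. Rewriting `y₂ y₁ⁱ y₂ʲ` into ordered monomials produces
`y₁ (y₂ y₁ⁱ⁻¹ y₂ʲ)`, and moving `y₁` past a coefficient in `A` produces `y₂` again, so it is not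
obvious that rewriting terminates. It does because the monomials of top total degree in
`y₂ y₁ⁱ y₂ʲ` have coefficients in the central field `K`; only terms of lower total degree have
coefficients in `A`. This gives an induction on total degree (`y_mul_mem`).
-/

/-!
Common definitions for formalizing "Double Ore Extensions versus Iterated Ore Extensions"
(Carvalho, Lopes, Matczuk).

We model an extension `B` of a `K`-algebra `A` via an injective algebra map `ι : A →ₐ[K] B`.
-/

universe u v

namespace RightDoubleExtension

section Spanning

variable {K A R : Type*} [Field K] [Ring A] [Algebra K A] [Ring R] [Algebra K R]

/-! ### The filtration by total degree -/

/-- The left `A`-span of the ordered monomials `y₁ⁱy₂ʲ` of total degree at most `n`, as an additive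
submonoid of `R`. -/
def filt (ι : A →ₐ[K] R) (y₁ y₂ : R) (n : ℕ) : AddSubmonoid R :=
  AddSubmonoid.closure {x | ∃ a i j, i + j ≤ n ∧ x = ι a * (y₁ ^ i * y₂ ^ j)}

/-- The sums of an element of `filt ι y₁ y₂ n` and a `K`-linear combination of the ordered monomials
of total degree exactly `n + 1`. -/
def scalarTop (ι : A →ₐ[K] R) (y₁ y₂ : R) (n : ℕ) : AddSubmonoid R :=
  filt ι y₁ y₂ n ⊔
    AddSubmonoid.closure {x | ∃ (k : K) (i j : ℕ), i + j = n + 1 ∧ x = k • (y₁ ^ i * y₂ ^ j)}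

variable {ι : A →ₐ[K] R} {y₁ y₂ : R}

lemma mem_filt {n i j : ℕ} (a : A) (h : i + j ≤ n) :
    ι a * (y₁ ^ i * y₂ ^ j) ∈ filt ι y₁ y₂ n :=
  AddSubmonoid.subset_closure ⟨a, i, j, h, rfl⟩

lemma monomial_mem_filt {n i j : ℕ} (h : i + j ≤ n) : y₁ ^ i * y₂ ^ j ∈ filt ι y₁ y₂ n := by
  simpa using mem_filt (ι := ι) (y₁ := y₁) (y₂ := y₂) 1 h

lemma smul_monomial_mem_scalarTop {n i j : ℕ} (k : K) (h : i + j = n + 1) :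
    k • (y₁ ^ i * y₂ ^ j) ∈ scalarTop ι y₁ y₂ n :=
  (le_sup_right : _ ≤ scalarTop ι y₁ y₂ n) (AddSubmonoid.subset_closure ⟨k, i, j, h, rfl⟩)

lemma monomial_mem_scalarTop {n i j : ℕ} (h : i + j = n + 1) :
    y₁ ^ i * y₂ ^ j ∈ scalarTop ι y₁ y₂ n := by
  simpa using smul_monomial_mem_scalarTop (ι := ι) (y₁ := y₁) (y₂ := y₂) (1 : K) h

lemma filt_mono {m n : ℕ} (h : m ≤ n) : filt ι y₁ y₂ m ≤ filt ι y₁ y₂ n := by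
  apply AddSubmonoid.closure_mono
  rintro x ⟨a, i, j, hij, rfl⟩
  exact ⟨a, i, j, hij.trans h, rfl⟩

lemma filt_le_scalarTop (n : ℕ) : filt ι y₁ y₂ n ≤ scalarTop ι y₁ y₂ n := le_sup_left

/-- To check that left multiplication by `r` maps `filt n` into an additive submonoid, it suffices to
look at the spanning elements. -/
lemma mul_mem_of_mem_filt {n : ℕ} {M : AddSubmonoid R} {r : R}
    (h : ∀ (a : A) (i j : ℕ), i + j ≤ n → r * (ι a * (y₁ ^ i * y₂ ^ j)) ∈ M)
    {x : R} (hx : x ∈ filt ι y₁ y₂ n) : r * x ∈ M := by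
  have : filt ι y₁ y₂ n ≤ M.comap (AddMonoidHom.mulLeft r) := by
    refine AddSubmonoid.closure_le.2 ?_
    rintro x ⟨a, i, j, hij, rfl⟩
    exact h a i j hij
  exact this hx

lemma mul_mem_of_mem_scalarTop {n : ℕ} {M : AddSubmonoid R} {r : R}
    (h : ∀ x ∈ filt ι y₁ y₂ n, r * x ∈ M)
    (h' : ∀ (k : K) (i j : ℕ), i + j = n + 1 → r * (k • (y₁ ^ i * y₂ ^ j)) ∈ M)
    {x : R} (hx : x ∈ scalarTop ι y₁ y₂ n) : r * x ∈ M := by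
  have : scalarTop ι y₁ y₂ n ≤ M.comap (AddMonoidHom.mulLeft r) := by
    refine sup_le h (AddSubmonoid.closure_le.2 ?_)
    rintro x ⟨k, i, j, hij, rfl⟩
    exact h' k i j hij
  exact this hx

lemma algHom_mul_mem_filt {n : ℕ} (a : A) {x : R} (hx : x ∈ filt ι y₁ y₂ n) :
    ι a * x ∈ filt ι y₁ y₂ n := by
  refine mul_mem_of_mem_filt (fun b i j hij => ?_) hx
  rw [← mul_assoc, ← map_mul]
  exact mem_filt _ hij

lemma smul_mem_filt {n : ℕ} (k : K) {x : R} (hx : x ∈ filt ι y₁ y₂ n) :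
    k • x ∈ filt ι y₁ y₂ n := by
  simpa [Algebra.smul_def] using algHom_mul_mem_filt (algebraMap K A k) hx

lemma smul_mem_scalarTop {n : ℕ} (k : K) {x : R} (hx : x ∈ scalarTop ι y₁ y₂ n) :
    k • x ∈ scalarTop ι y₁ y₂ n := by
  rw [Algebra.smul_def]
  refine mul_mem_of_mem_scalarTop (fun x hx => ?_) (fun l i j hij => ?_) hx
  · rw [← Algebra.smul_def]
    exact filt_le_scalarTop n (smul_mem_filt k hx)
  · rw [← Algebra.smul_def, smul_smul]
    exact smul_monomial_mem_scalarTop _ hij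

lemma scalarTop_le_filt (n : ℕ) : scalarTop ι y₁ y₂ n ≤ filt ι y₁ y₂ (n + 1) := by
  refine sup_le (filt_mono n.le_succ) (AddSubmonoid.closure_le.2 ?_)
  rintro x ⟨k, i, j, hij, rfl⟩
  exact smul_mem_filt k (monomial_mem_filt hij.le)

variable {p₁₂ p₁₁ : K} {τ₀ τ₁ τ₂ : A} {σ₁₁ σ₁₂ σ₂₁ σ₂₂ δ₁ δ₂ : A → A}

/-! ### Consequences of the relations -/

/-- Left multiplication by `y₁` or `y₂` raises total degree by at most one, and the part of
`y₂y₁ⁱy₂ʲ` of degree `i + j + 1` has coefficients in `K`. The two assertions have to be proved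
together: the first reduces to the second, which in degree `n + 1` uses the first in degree `n`. -/
lemma y_mul_mem
    (hq : y₂ * y₁ = p₁₂ • (y₁ * y₂) + p₁₁ • (y₁ * y₁) + ι τ₁ * y₁ + ι τ₂ * y₂ + ι τ₀)
    (h₁ : ∀ a : A, y₁ * ι a = ι (σ₁₁ a) * y₁ + ι (σ₁₂ a) * y₂ + ι (δ₁ a))
    (h₂ : ∀ a : A, y₂ * ι a = ι (σ₂₁ a) * y₁ + ι (σ₂₂ a) * y₂ + ι (δ₂ a)) (n : ℕ) :
    (∀ i j, i + j = n → y₂ * (y₁ ^ i * y₂ ^ j) ∈ scalarTop ι y₁ y₂ n) ∧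
    (∀ x ∈ filt ι y₁ y₂ n, y₁ * x ∈ filt ι y₁ y₂ (n + 1) ∧ y₂ * x ∈ filt ι y₁ y₂ (n + 1)) := by
  induction n using Nat.strong_induction_on with
  | _ n ih =>
    have top : ∀ i j, i + j = n → y₂ * (y₁ ^ i * y₂ ^ j) ∈ scalarTop ι y₁ y₂ n := by
      rintro (_ | i) j hij
      · have := monomial_mem_scalarTop (ι := ι) (y₁ := y₁) (y₂ := y₂) (n := n) (i := 0) (j := j + 1)
          (by omega)
        simpa [pow_succ'] using this
      · obtain ⟨m, rfl⟩ : ∃ m, n = m + 1 := ⟨i + j, by omega⟩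
        obtain ⟨ihtop, ihfilt⟩ := ih m (by omega)
        have hy₂ := ihtop i j (by omega)
        have e : y₂ * (y₁ ^ (i + 1) * y₂ ^ j) =
            p₁₂ • (y₁ * (y₂ * (y₁ ^ i * y₂ ^ j))) + p₁₁ • (y₁ ^ (i + 2) * y₂ ^ j)
              + ι τ₁ * (y₁ ^ (i + 1) * y₂ ^ j) + ι τ₂ * (y₂ * (y₁ ^ i * y₂ ^ j))
              + ι τ₀ * (y₁ ^ i * y₂ ^ j) := by
          have : y₂ * (y₁ ^ (i + 1) * y₂ ^ j) = (y₂ * y₁) * (y₁ ^ i * y₂ ^ j) := by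
            simp only [pow_succ', mul_assoc]
          rw [this, hq]
          simp only [add_mul, smul_mul_assoc, pow_succ', mul_assoc]
        rw [e]
        refine add_mem (add_mem (add_mem (add_mem ?_ ?_) ?_) ?_) ?_
        · -- `y₁` commutes with the scalar coefficients of the top-degree part.
          refine smul_mem_scalarTop _ (mul_mem_of_mem_scalarTop
            (fun x hx => filt_le_scalarTop _ (ihfilt x hx).1) (fun k a b hab => ?_) hy₂)
          have := smul_monomial_mem_scalarTop (ι := ι) (y₁ := y₁) (y₂ := y₂) (n := m + 1)
            (i := a + 1) (j := b) k (by omega)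
          simpa only [mul_smul_comm, pow_succ', mul_assoc] using this
        · exact smul_monomial_mem_scalarTop _ (by omega)
        · exact filt_le_scalarTop _ (mem_filt _ (by omega))
        · exact filt_le_scalarTop _ (algHom_mul_mem_filt _ (scalarTop_le_filt _ hy₂))
        · exact filt_le_scalarTop _ (mem_filt _ (by omega))
    have y₂_mono : ∀ i j, i + j ≤ n → y₂ * (y₁ ^ i * y₂ ^ j) ∈ filt ι y₁ y₂ (n + 1) := by
      intro i j hij
      rcases hij.eq_or_lt with h | h
      · exact scalarTop_le_filt _ (top i j h)
      · exact filt_mono (by omega) (scalarTop_le_filt _ ((ih _ h).1 i j rfl))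
    have key : ∀ (r : R) (s t d : A → A),
        (∀ a, r * ι a = ι (s a) * y₁ + ι (t a) * y₂ + ι (d a)) →
        ∀ x ∈ filt ι y₁ y₂ n, r * x ∈ filt ι y₁ y₂ (n + 1) := by
      intro r s t d hr x hx
      refine mul_mem_of_mem_filt (fun a i j hij => ?_) hx
      rw [← mul_assoc, hr, add_mul, add_mul, mul_assoc, mul_assoc]
      refine add_mem (add_mem (algHom_mul_mem_filt _ ?_)
        (algHom_mul_mem_filt _ (y₂_mono i j hij))) (mem_filt _ (by omega))
      rw [← mul_assoc, ← pow_succ']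
      exact monomial_mem_filt (by omega)
    exact ⟨top, fun x hx => ⟨key _ _ _ _ h₁ x hx, key _ _ _ _ h₂ x hx⟩⟩

lemma exists_finsupp_of_mem_filt {n : ℕ} {x : R} (hx : x ∈ filt ι y₁ y₂ n) :
    ∃ f : (ℕ × ℕ) →₀ A, x = f.sum fun ij a => ι a * (y₁ ^ ij.1 * y₂ ^ ij.2) := by
  induction hx using AddSubmonoid.closure_induction with
  | mem x hx =>
    obtain ⟨a, i, j, -, rfl⟩ := hx
    exact ⟨Finsupp.single (i, j) a, by simp⟩
  | zero => exact ⟨0, by simp⟩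
  | add x y _ _ hx hy =>
    obtain ⟨f, rfl⟩ := hx
    obtain ⟨g, rfl⟩ := hy
    refine ⟨f + g, (Finsupp.sum_add_index' (by simp) (by simp [add_mul])).symm⟩

/-- The relations of a right double extension alone, without freeness, imply that the subalgebra
generated by `A`, `y₁`, `y₂` is the left `A`-span of the ordered monomials. -/
lemma exists_finsupp_of_mem_adjoin
    (hq : y₂ * y₁ = p₁₂ • (y₁ * y₂) + p₁₁ • (y₁ * y₁) + ι τ₁ * y₁ + ι τ₂ * y₂ + ι τ₀)
    (h₁ : ∀ a : A, y₁ * ι a = ι (σ₁₁ a) * y₁ + ι (σ₁₂ a) * y₂ + ι (δ₁ a))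
    (h₂ : ∀ a : A, y₂ * ι a = ι (σ₂₁ a) * y₁ + ι (σ₂₂ a) * y₂ + ι (δ₂ a))
    {x : R} (hx : x ∈ Algebra.adjoin K (Set.range ι ∪ {y₁, y₂})) :
    ∃ f : (ℕ × ℕ) →₀ A, x = f.sum fun ij a => ι a * (y₁ ^ ij.1 * y₂ ^ ij.2) := by
  -- The elements of `R` by which left multiplication raises degree boundedly form a subalgebra.
  have bdd : ∃ d, ∀ n, ∀ z ∈ filt ι y₁ y₂ n, x * z ∈ filt ι y₁ y₂ (n + d) := by
    induction hx using Algebra.adjoin_induction with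
    | mem x hx =>
      rcases hx with ⟨a, rfl⟩ | rfl | rfl
      · exact ⟨0, fun n z hz => algHom_mul_mem_filt a hz⟩
      · exact ⟨1, fun n z hz => ((y_mul_mem hq h₁ h₂ n).2 z hz).1⟩
      · exact ⟨1, fun n z hz => ((y_mul_mem hq h₁ h₂ n).2 z hz).2⟩
    | algebraMap k =>
      refine ⟨0, fun n z hz => ?_⟩
      rw [← Algebra.smul_def]
      exact smul_mem_filt k hz
    | add x y _ _ hx hy =>
      obtain ⟨c, hc⟩ := hx
      obtain ⟨d, hd⟩ := hy
      refine ⟨c + d, fun n z hz => ?_⟩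
      rw [add_mul]
      exact add_mem (filt_mono (by omega) (hc n z hz)) (filt_mono (by omega) (hd n z hz))
    | mul x y _ _ hx hy =>
      obtain ⟨c, hc⟩ := hx
      obtain ⟨d, hd⟩ := hy
      refine ⟨d + c, fun n z hz => ?_⟩
      rw [mul_assoc, ← add_assoc]
      exact hc _ _ (hd n z hz)
  obtain ⟨d, hd⟩ := bdd
  have one_mem : (1 : R) ∈ filt ι y₁ y₂ 0 := by
    simpa using monomial_mem_filt (ι := ι) (y₁ := y₁) (y₂ := y₂) (n := 0) (i := 0) (j := 0) le_rfl
  exact exists_finsupp_of_mem_filt (by simpa using hd 0 1 one_mem)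

/-! ### Comparison with a right double extension -/

/-- If `Y₁, Y₂` in a `K`-algebra `R` over `A` satisfy the relations of a right double extension `B`
and `p : R → B` matches the generators, then `p` restricts to a bijection from the subalgebra
generated by `A, Y₁, Y₂` onto `B`. -/
lemma bijective_restrict {B : Type*} [Ring B] [Algebra K B] {ι : A →ₐ[K] B} {y₁ y₂ : B}
    (hB : IsRightDoubleExtension ι y₁ y₂ p₁₂ p₁₁ τ₀ τ₁ τ₂ σ₁₁ σ₁₂ σ₂₁ σ₂₂ δ₁ δ₂)
    (j : A →ₐ[K] R) (Y₁ Y₂ : R)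
    (hq : Y₂ * Y₁ = p₁₂ • (Y₁ * Y₂) + p₁₁ • (Y₁ * Y₁) + j τ₁ * Y₁ + j τ₂ * Y₂ + j τ₀)
    (h₁ : ∀ a : A, Y₁ * j a = j (σ₁₁ a) * Y₁ + j (σ₁₂ a) * Y₂ + j (δ₁ a))
    (h₂ : ∀ a : A, Y₂ * j a = j (σ₂₁ a) * Y₁ + j (σ₂₂ a) * Y₂ + j (δ₂ a))
    (p : R →ₐ[K] B) (hpj : ∀ a, p (j a) = ι a) (hp₁ : p Y₁ = y₁) (hp₂ : p Y₂ = y₂) :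
    Function.Bijective
      (p.comp (Algebra.adjoin K (Set.range j ∪ {Y₁, Y₂})).val) := by
  obtain ⟨-, hgen, -, -, hfree, -, -⟩ := hB
  constructor
  · rw [injective_iff_map_eq_zero]
    rintro ⟨x, hx⟩ hpx
    obtain ⟨f, rfl⟩ := exists_finsupp_of_mem_adjoin hq h₁ h₂ hx
    have hf : f = 0 := by
      apply hfree
      simpa [Finsupp.sum, hpj, hp₁, hp₂] using hpx
    subst hf
    apply Subtype.ext
    simp
  · have hmap : (Algebra.adjoin K (Set.range j ∪ {Y₁, Y₂})).map p = ⊤ := by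
      rw [AlgHom.map_adjoin, ← hgen, Set.image_union, Set.image_pair, hp₁, hp₂, ← Set.range_comp]
      congr 3
      exact funext hpj
    intro b
    obtain ⟨x, hx, rfl⟩ : b ∈ (Algebra.adjoin K (Set.range j ∪ {Y₁, Y₂})).map p :=
      hmap ▸ Algebra.mem_top
    exact ⟨⟨x, hx⟩, rfl⟩

end Spanning

end RightDoubleExtension

/-- **Uniqueness of right double extensions.** If `B` and `B'` are both right double
extensions `A_P[y₁,y₂;σ,δ,τ]` of `A` with the same data `σ, δ, P, τ`, then there is an
algebra isomorphism `B ≃ B'` restricting to the identity on `A` and mapping `yᵢ ∈ B` to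
the corresponding element `yᵢ ∈ B'`, `i = 1, 2`. -/
theorem rightDoubleExtension_unique
    {K A B B' : Type*} [Field K] [Ring A] [Algebra K A]
    [Ring B] [Algebra K B] [Ring B'] [Algebra K B']
    (ι : A →ₐ[K] B) (ι' : A →ₐ[K] B') (y₁ y₂ : B) (y₁' y₂' : B')
    (p₁₂ p₁₁ : K) (τ₀ τ₁ τ₂ : A) (σ₁₁ σ₁₂ σ₂₁ σ₂₂ δ₁ δ₂ : A → A)
    (hB : IsRightDoubleExtension ι y₁ y₂ p₁₂ p₁₁ τ₀ τ₁ τ₂ σ₁₁ σ₁₂ σ₂₁ σ₂₂ δ₁ δ₂)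
    (hB' : IsRightDoubleExtension ι' y₁' y₂' p₁₂ p₁₁ τ₀ τ₁ τ₂ σ₁₁ σ₁₂ σ₂₁ σ₂₂ δ₁ δ₂) :
    ∃ e : B ≃ₐ[K] B', (∀ a : A, e (ι a) = ι' a) ∧ e y₁ = y₁' ∧ e y₂ = y₂' := by
  have hB₀ := hB
  have hB₀' := hB'
  obtain ⟨-, -, hq, -, -, h₁, h₂⟩ := hB₀
  obtain ⟨-, -, hq', -, -, h₁', h₂'⟩ := hB₀'
  let j : A →ₐ[K] B × B' := ι.prod ι'
  have Hq : ((y₂, y₂') : B × B') * (y₁, y₁') = p₁₂ • ((y₁, y₁') * (y₂, y₂'))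
      + p₁₁ • ((y₁, y₁') * (y₁, y₁')) + j τ₁ * (y₁, y₁') + j τ₂ * (y₂, y₂') + j τ₀ :=
    Prod.ext hq hq'
  have H₁ : ∀ a, ((y₁, y₁') : B × B') * j a =
      j (σ₁₁ a) * (y₁, y₁') + j (σ₁₂ a) * (y₂, y₂') + j (δ₁ a) :=
    fun a => Prod.ext (h₁ a) (h₁' a)
  have H₂ : ∀ a, ((y₂, y₂') : B × B') * j a =
      j (σ₂₁ a) * (y₁, y₁') + j (σ₂₂ a) * (y₂, y₂') + j (δ₂ a) :=
    fun a => Prod.ext (h₂ a) (h₂' a)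
  let S := Algebra.adjoin K (Set.range j ∪ {((y₁, y₁') : B × B'), (y₂, y₂')})
  let e₁ : S ≃ₐ[K] B := AlgEquiv.ofBijective _ (RightDoubleExtension.bijective_restrict hB
    j _ _ Hq H₁ H₂ (AlgHom.fst K B B') (fun _ => rfl) rfl rfl)
  let e₂ : S ≃ₐ[K] B' := AlgEquiv.ofBijective _ (RightDoubleExtension.bijective_restrict hB'
    j _ _ Hq H₁ H₂ (AlgHom.snd K B B') (fun _ => rfl) rfl rfl)
  have he : ∀ s : S, (e₁.symm.trans e₂) (s : B × B').1 = (s : B × B').2 := by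
    intro s
    change e₂ (e₁.symm (e₁ s)) = e₂ s
    rw [AlgEquiv.symm_apply_apply]
  exact ⟨e₁.symm.trans e₂,
    fun a => he ⟨j a, Algebra.subset_adjoin (Or.inl ⟨a, rfl⟩)⟩,
    he ⟨(y₁, y₁'), Algebra.subset_adjoin (Or.inr (Or.inl rfl))⟩,
    he ⟨(y₂, y₂'), Algebra.subset_adjoin (Or.inr (Or.inr rfl))⟩⟩
end

section
/- Let B = A_P[y₁,y₂;σ,δ,τ] be a right double extension with p₁₁ ≠ 0 and p₁₂ = 1. Then, setting ȳ₁ = p₁₁y₁ and ȳ₂ = y₂, B is a right double extension A_{{1,1}}[ȳ₁,ȳ₂; [[σ₁₁, p₁₁σ₁₂],[p₁₁⁻¹σ₂₁, σ₂₂]], [p₁₁δ₁; δ₂], τ̄] of A, where τ̄ = {p₁₁τ₀, τ₁, p₁₁τ₂}. -/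
/-!
Replacing `y₁` by `c y₁` for a nonzero scalar `c` multiplies the monomial `y₁ⁱ y₂ʲ` by the unit
`cⁱ`, so the freeness of `B` over `A` is preserved: `sum_rescale` absorbs these units into the
coefficients. The quadratic relation and the commutation rules for `c y₁`, `y₂` follow from those
for `y₁`, `y₂` by scaling. In the quadratic relation, multiplication by `c = p₁₁` turns the
coefficient `p₁₁` of `y₁²` into the coefficient `1` of `(p₁₁ y₁)²`.
-/

/-!
Common definitions for formalizing "Double Ore Extensions versus Iterated Ore Extensions"
(Carvalho, Lopes, Matczuk).

We model an extension `B` of a `K`-algebra `A` via an injective algebra map `ι : A →ₐ[K] B`.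
-/

universe u v

/-- The family of coefficients `f` with the `(i, j)` entry multiplied by `cⁱ`. -/
noncomputable def rescale {K A : Type*} [Field K] [Ring A] [Algebra K A] (c : K)
    (f : (ℕ × ℕ) →₀ A) : (ℕ × ℕ) →₀ A :=
  Finsupp.onFinset f.support (fun ij => c ^ ij.1 • f ij) fun ij h => by
    rw [Finsupp.mem_support_iff]
    intro h0
    exact h (by rw [h0, smul_zero])

theorem sum_rescale {K A B : Type*} [Field K] [Ring A] [Algebra K A] [Ring B] [Algebra K B]
    (ι : A →ₐ[K] B) (y₁ y₂ : B) (c : K) (f : (ℕ × ℕ) →₀ A) :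
    ((rescale c f).sum fun ij a => ι a * (y₁ ^ ij.1 * y₂ ^ ij.2)) =
      f.sum fun ij a => ι a * ((c • y₁) ^ ij.1 * y₂ ^ ij.2) := by
  unfold rescale
  rw [Finsupp.onFinset_sum _ (by simp), Finsupp.sum]
  refine Finset.sum_congr rfl fun ij _ => ?_
  simp only [map_smul, smul_pow, smul_mul_assoc, mul_smul_comm]

/-- **Lemma (newP, part (a)).** Let `B = A_P[y₁,y₂;σ,δ,τ]` be a right double extension
with `p₁₁ ≠ 0` and `p₁₂ = 1`. Then, with `ȳ₁ = p₁₁y₁` and `ȳ₂ = y₂`, `B` is the right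
double extension
`A_{1,1}[ȳ₁,ȳ₂; [[σ₁₁, p₁₁σ₁₂],[p₁₁⁻¹σ₂₁, σ₂₂]], [p₁₁δ₁; δ₂], {p₁₁τ₀, τ₁, p₁₁τ₂}]`. -/
theorem rightDoubleExtension_newP_a
    {K A B : Type*} [Field K] [Ring A] [Algebra K A] [Ring B] [Algebra K B]
    (ι : A →ₐ[K] B) (y₁ y₂ : B) (p₁₂ p₁₁ : K) (τ₀ τ₁ τ₂ : A)
    (σ₁₁ σ₁₂ σ₂₁ σ₂₂ δ₁ δ₂ : A → A)
    (hB : IsRightDoubleExtension ι y₁ y₂ p₁₂ p₁₁ τ₀ τ₁ τ₂ σ₁₁ σ₁₂ σ₂₁ σ₂₂ δ₁ δ₂)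
    (hp₁₁ : p₁₁ ≠ 0) (hp₁₂ : p₁₂ = 1) :
    IsRightDoubleExtension ι (p₁₁ • y₁) y₂ 1 1
      (p₁₁ • τ₀) τ₁ (p₁₁ • τ₂)
      σ₁₁ (fun a => p₁₁ • σ₁₂ a) (fun a => p₁₁⁻¹ • σ₂₁ a) σ₂₂
      (fun a => p₁₁ • δ₁ a) δ₂ := by
  subst hp₁₂
  obtain ⟨hι, hgen, hrel, hspan, hind, h₁, h₂⟩ := hB
  -- `p₁₁⁻¹ (p₁₁ y₁) = y₁` expresses everything back in terms of the original generators.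
  have hy : p₁₁⁻¹ • (p₁₁ • y₁) = y₁ := inv_smul_smul₀ hp₁₁ y₁
  refine ⟨hι, ?_, ?_, fun b => ?_, fun f hf => ?_, fun a => ?_, fun a => ?_⟩
  · rw [eq_top_iff, ← hgen]
    refine Algebra.adjoin_le ?_
    rintro x (hx | rfl | rfl)
    · exact Algebra.subset_adjoin (Or.inl hx)
    · have h := Subalgebra.smul_mem _ (Algebra.subset_adjoin (R := K)
        (s := Set.range ι ∪ {p₁₁ • x, y₂}) (Or.inr (Or.inl rfl))) p₁₁⁻¹
      rwa [hy] at h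
    · exact Algebra.subset_adjoin (Or.inr (Or.inr rfl))
  · rw [mul_smul_comm, hrel]
    simp only [map_smul, smul_mul_assoc, mul_smul_comm, smul_add, one_smul]
  · obtain ⟨f, rfl⟩ := hspan b
    exact ⟨rescale p₁₁⁻¹ f, by rw [sum_rescale, hy]⟩
  · have h0 := hind (rescale p₁₁ f) (by rw [sum_rescale, hf])
    ext ij
    have h : p₁₁ ^ ij.1 • f ij = 0 := DFunLike.congr_fun h0 ij
    exact (smul_eq_zero_iff_right (pow_ne_zero _ hp₁₁)).mp h
  · rw [smul_mul_assoc, h₁]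
    simp only [map_smul, smul_mul_assoc, mul_smul_comm, smul_add]
  · rw [h₂, map_smul, smul_mul_assoc, ← mul_smul_comm, hy]
end

section
/- Let A[y₁;σ₁,d₁][y₂;σ₂,d₂] be an iterated Ore extension of a K-algebra A (K a field) such that σ₂(A) ⊆ A and σ₂(y₁) = p·y₁ + q for some p ∈ K* and q ∈ A. Then σ₁σ₂(a) = σ₂σ₁(a) for all a ∈ A. -/
/-!
The element `y₂ y₁ a` is expanded in two ways. Since `B` is free over `A₁ = A[y₁]` on the powers of
`y₂`, the coefficient `s` in `s y₂ + t` is determined (`coeff_unique`), so the rule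
`y₂ s = σ₂(s) y₂ + d₂(s)` forces `σ₂` to be additive and multiplicative on `A₁`
(`sigma_add`, `sigma_mul`). Applying `σ₂` to `y₁ a = σ₁(a) y₁ + d₁(a)` then gives
`(p y₁ + q) σ₂(a) = σ₂(σ₁(a)) (p y₁ + q) + σ₂(d₁(a))`. Moving `y₁` to the right and comparing
the coefficients of `y₁` (freeness of `A₁` over `A`, again `coeff_unique`) yields
`p σ₁(σ₂(a)) = p σ₂(σ₁(a))`, and `p` is invertible.
-/

/-!
Common definitions for formalizing "Double Ore Extensions versus Iterated Ore Extensions"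
(Carvalho, Lopes, Matczuk).

We model an extension `B` of a `K`-algebra `A` via an injective algebra map `ι : A →ₐ[K] B`.
-/

universe u v

/-- In a ring containing `R` (via `φ`) where the powers of `y` are left linearly independent
over `R`, the leading coefficient of `s y + t` is determined. -/
theorem coeff_unique {R B : Type*} [Ring R] [Ring B] (φ : R →+* B) (y : B)
    (hfree : ∀ f : ℕ →₀ R, (f.sum fun i r => φ r * y ^ i) = 0 → f = 0)
    {s t s' t' : R} (h : φ s * y + φ t = φ s' * y + φ t') : s = s' := by
  have h0 := hfree (Finsupp.single 1 (s - s') + Finsupp.single 0 (t - t')) (by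
    rw [Finsupp.sum_add_index' (by simp) (by simp [add_mul]),
      Finsupp.sum_single_index (by simp), Finsupp.sum_single_index (by simp)]
    simp only [map_sub, pow_one, pow_zero, mul_one, sub_mul]
    rw [sub_add_sub_comm, h, sub_self])
  simpa [sub_eq_zero] using DFunLike.congr_fun h0 1

section IteratedOre

variable {K A B : Type*} [Field K] [Ring A] [Algebra K A] [Ring B] [Algebra K B]
  {ι : A →ₐ[K] B} {y₁ y₂ : B} {σ₁ d₁ : A → A} {σ₂ d₂ : B → B}

theorem sigma_eq_of_mul_eq (h : IsIteratedOreExtension ι y₁ y₂ σ₁ d₁ σ₂ d₂) {b s t : B}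
    (hb : b ∈ Algebra.adjoin K (Set.range ι ∪ {y₁}))
    (hs : s ∈ Algebra.adjoin K (Set.range ι ∪ {y₁}))
    (ht : t ∈ Algebra.adjoin K (Set.range ι ∪ {y₁}))
    (hst : y₂ * b = s * y₂ + t) : σ₂ b = s := by
  obtain ⟨-, -, -, -, hpres, -, hfree, hmul⟩ := h
  have := coeff_unique (Algebra.adjoin K (Set.range ι ∪ {y₁})).val.toRingHom y₂ hfree
    (s := ⟨σ₂ b, (hpres b hb).1⟩) (t := ⟨d₂ b, (hpres b hb).2⟩) (s' := ⟨s, hs⟩) (t' := ⟨t, ht⟩)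
    ((hmul b hb).symm.trans hst)
  exact congrArg Subtype.val this

theorem sigma_add (h : IsIteratedOreExtension ι y₁ y₂ σ₁ d₁ σ₂ d₂) {b c : B}
    (hb : b ∈ Algebra.adjoin K (Set.range ι ∪ {y₁}))
    (hc : c ∈ Algebra.adjoin K (Set.range ι ∪ {y₁})) : σ₂ (b + c) = σ₂ b + σ₂ c := by
  obtain ⟨-, -, -, -, hpres, -, -, hmul⟩ := id h
  refine sigma_eq_of_mul_eq h (add_mem hb hc) (add_mem (hpres b hb).1 (hpres c hc).1)
    (add_mem (hpres b hb).2 (hpres c hc).2) ?_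
  rw [mul_add, hmul b hb, hmul c hc, add_mul]
  abel

theorem sigma_mul (h : IsIteratedOreExtension ι y₁ y₂ σ₁ d₁ σ₂ d₂) {b c : B}
    (hb : b ∈ Algebra.adjoin K (Set.range ι ∪ {y₁}))
    (hc : c ∈ Algebra.adjoin K (Set.range ι ∪ {y₁})) : σ₂ (b * c) = σ₂ b * σ₂ c := by
  obtain ⟨-, -, -, -, hpres, -, -, hmul⟩ := id h
  -- `y₂ b c = (σ₂(b) y₂ + d₂(b)) c = σ₂(b) σ₂(c) y₂ + (σ₂(b) d₂(c) + d₂(b) c)`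
  refine sigma_eq_of_mul_eq h (mul_mem hb hc) (mul_mem (hpres b hb).1 (hpres c hc).1)
    (add_mem (mul_mem (hpres b hb).1 (hpres c hc).2) (mul_mem (hpres b hb).2 hc)) ?_
  rw [← mul_assoc, hmul b hb, add_mul, mul_assoc, hmul c hc, mul_add, mul_assoc, add_assoc]

end IteratedOre

/-- **Lemma (commuting).** Let `A[y₁;σ₁,d₁][y₂;σ₂,d₂]` be an iterated Ore extension such
that `σ₂(A) ⊆ A` (say `σ₂ ∘ ι = ι ∘ σ₂A` for a map `σ₂A : A → A`) and
`σ₂(y₁) = p·y₁ + q` for some `p ∈ K*` and `q ∈ A`. Then `σ₁σ₂(a) = σ₂σ₁(a)` for all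
`a ∈ A`. -/
theorem sigma_commute_of_iteratedOre
    {K A B : Type*} [Field K] [Ring A] [Algebra K A] [Ring B] [Algebra K B]
    (ι : A →ₐ[K] B) (y₁ y₂ : B) (σ₁ d₁ : A → A) (σ₂ d₂ : B → B)
    (h : IsIteratedOreExtension ι y₁ y₂ σ₁ d₁ σ₂ d₂)
    (σ₂A : A → A) (hσ₂A : ∀ a : A, σ₂ (ι a) = ι (σ₂A a))
    (p : K) (hp : p ≠ 0) (q : A) (hσ₂y₁ : σ₂ y₁ = p • y₁ + ι q) :
    ∀ a : A, σ₁ (σ₂A a) = σ₂A (σ₁ a) := by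
  intro a
  obtain ⟨-, -, hfree, hore, -⟩ := id h
  have hι (x : A) : ι x ∈ Algebra.adjoin K (Set.range ι ∪ {y₁}) :=
    Algebra.subset_adjoin (Or.inl ⟨x, rfl⟩)
  have hy : y₁ ∈ Algebra.adjoin K (Set.range ι ∪ {y₁}) := Algebra.subset_adjoin (Or.inr rfl)
  have key := congrArg σ₂ (hore a)
  rw [sigma_mul h hy (hι a), sigma_add h (mul_mem (hι _) hy) (hι _), sigma_mul h (hι _) hy,
    hσ₂y₁, hσ₂A, hσ₂A, hσ₂A, add_mul, smul_mul_assoc, hore, mul_add, mul_smul_comm] at key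
  have hcoeff : p • σ₁ (σ₂A a) = p • σ₂A (σ₁ a) := by
    refine coeff_unique ι.toRingHom y₁ hfree (t := p • d₁ (σ₂A a) + q * σ₂A a)
      (t' := σ₂A (σ₁ a) * q + σ₂A (d₁ a)) ?_
    change ι _ * y₁ + ι _ = ι _ * y₁ + ι _
    simpa only [map_add, map_mul, map_smul, smul_mul_assoc, smul_add, add_assoc] using key
  exact smul_right_injective A hp hcoeff
end

section
/- Let A, B be K-algebras (K a field) with B an extension of A, P = {p₁₂,p₁₁} ⊆ K, τ = {τ₀,τ₁,τ₂} ⊆ A, σ : A → M₂ₓ₂(A) an algebra homomorphism and δ : A → M₂ₓ₁(A) a σ-derivation. The following are equivalent: (i) B = A_P[y₁,y₂;σ,δ,τ] is a right double extension of A which can be presented as an iterated Ore extension A[y₁;σ₁,d₁][y₂;σ₂,d₂] (i.e. the identity of A extends to an algebra isomorphism sending y_i to y_i); (ii) B = A_P[y₁,y₂;σ,δ,τ] is a right double extension of A with σ₁₂ = 0; (iii) B = A[y₁;σ₁,d₁][y₂;σ₂,d₂] is an iterated Ore extension such that σ₂(A) ⊆ A, σ₂(y₁) = p₁₂y₁ +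 τ₂, d₂(A) ⊆ Ay₁ + A and d₂(y₁) = p₁₁y₁² + τ₁y₁ + τ₀. In this situation the data are related by σ = [[σ₁, 0],[σ₂₁, σ₂|_A]] and δ(a) = [d₁(a); d₂(a) − σ₂₁(a)y₁] for all a ∈ A, where σ₂₁, δ₂ : A → A are defined by d₂(a) = σ₂₁(a)y₁ + δ₂(a). -/
/-!
Write `A₁ = A[y₁]` for the subalgebra of `B` generated by `A` and `y₁`. Everything rests on the
regrouping `∑ aᵢⱼ y₁ⁱ y₂ʲ = ∑ⱼ (∑ᵢ aᵢⱼ y₁ⁱ) y₂ʲ`: once `A₁` is known to be free over `A` on the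
powers of `y₁`, it shows that `B` is free over `A` on the `y₁ⁱ y₂ʲ` if and only if it is free over
`A₁` on the powers of `y₂` (`dblSum_eq_iterSum`, where `regroup` is the additive bijection between
the two kinds of coefficient families).

If `σ₁₂ = 0`, then `y₁a ∈ Ay₁ + A`, so the left `A`-span of the powers of `y₁` is stable under left
multiplication by `A` and `y₁`; hence it is all of `A₁` (`mem_adjoin_iff`). The commutation rules
give `y₂s ∈ A₁y₂ + A₁` for the generators `s` of `A₁`, and this property is inherited by sums and
products (`exists_mul_eq`). The coefficients of `y₂s`, which are unique by freeness, define
`σ₂` and `d₂`, and comparing coefficients on generators gives their prescribed values.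

Conversely, in an iterated Ore extension `y₁a` has no `y₂`-component, which forces `σ₁₂ = 0`, and
the rule for `y₂s` with `s ∈ A` or `s = y₁` yields the relations of a right double extension.
-/

/-!
Common definitions for formalizing "Double Ore Extensions versus Iterated Ore Extensions"
(Carvalho, Lopes, Matczuk).

We model an extension `B` of a `K`-algebra `A` via an injective algebra map `ι : A →ₐ[K] B`.
-/

universe u v

section Aux

variable {K : Type*} {A : Type*} {B : Type*} [Field K] [Ring A] [Algebra K A]
  [Ring B] [Algebra K B]

/-! ### Coefficient families and the subalgebra `A[y]` -/

/-- The subalgebra `A[y]` of `B` generated by `A` and `y`. -/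
abbrev adj (ι : A →ₐ[K] B) (y : B) : Subalgebra K B :=
  Algebra.adjoin K (Set.range ι ∪ {y})

/-- The additive map `(aᵢ) ↦ ∑ aᵢ yⁱ`. -/
noncomputable def powSum (ι : A →ₐ[K] B) (y : B) : (ℕ →₀ A) →+ B :=
  Finsupp.liftAddHom fun i => (AddMonoidHom.mulRight (y ^ i)).comp (ι : A →+ B)

/-- The additive map `(aᵢⱼ) ↦ ∑ aᵢⱼ y₁ⁱ y₂ʲ`. -/
noncomputable def dblSum (ι : A →ₐ[K] B) (y₁ y₂ : B) : (ℕ × ℕ →₀ A) →+ B :=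
  Finsupp.liftAddHom fun ij =>
    (AddMonoidHom.mulRight (y₁ ^ ij.1 * y₂ ^ ij.2)).comp (ι : A →+ B)

/-- The additive map `(sⱼ) ↦ ∑ sⱼ yʲ` with coefficients in a subalgebra `S`. -/
noncomputable def iterSum (S : Subalgebra K B) (y : B) : (ℕ →₀ S) →+ B :=
  Finsupp.liftAddHom fun i => (AddMonoidHom.mulRight (y ^ i)).comp (S.val : S →+ B)

lemma powSum_apply (ι : A →ₐ[K] B) (y : B) (f : ℕ →₀ A) :
    powSum ι y f = f.sum fun i a => ι a * y ^ i := rfl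

lemma dblSum_apply (ι : A →ₐ[K] B) (y₁ y₂ : B) (f : ℕ × ℕ →₀ A) :
    dblSum ι y₁ y₂ f = f.sum fun ij a => ι a * (y₁ ^ ij.1 * y₂ ^ ij.2) := rfl

lemma iterSum_apply (S : Subalgebra K B) (y : B) (f : ℕ →₀ S) :
    iterSum S y f = f.sum fun i s => (s : B) * y ^ i := rfl

@[simp] lemma powSum_single (ι : A →ₐ[K] B) (y : B) (i : ℕ) (a : A) :
    powSum ι y (Finsupp.single i a) = ι a * y ^ i := by
  simp [powSum]

@[simp] lemma dblSum_single (ι : A →ₐ[K] B) (y₁ y₂ : B) (ij : ℕ × ℕ) (a : A) :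
    dblSum ι y₁ y₂ (Finsupp.single ij a) = ι a * (y₁ ^ ij.1 * y₂ ^ ij.2) := by
  simp [dblSum]

@[simp] lemma iterSum_single (S : Subalgebra K B) (y : B) (i : ℕ) (s : S) :
    iterSum S y (Finsupp.single i s) = (s : B) * y ^ i := by
  simp [iterSum]

lemma mem_adj (ι : A →ₐ[K] B) (y : B) (a : A) : ι a ∈ adj ι y :=
  Algebra.subset_adjoin (Or.inl ⟨a, rfl⟩)

lemma self_mem_adj (ι : A →ₐ[K] B) (y : B) : y ∈ adj ι y :=
  Algebra.subset_adjoin (Or.inr rfl)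

lemma powSum_mem (ι : A →ₐ[K] B) (y : B) (f : ℕ →₀ A) : powSum ι y f ∈ adj ι y :=
  Subalgebra.sum_mem _ fun i _ =>
    Subalgebra.mul_mem _ (mem_adj ι y (f i)) (Subalgebra.pow_mem _ (self_mem_adj ι y) i)

/-- If `ya ∈ Ay + A` for all `a ∈ A`, then `A[y]` is the left `A`-span of the powers of `y`. -/
lemma mem_adjoin_iff (ι : A →ₐ[K] B) (y : B) (σ d : A → A)
    (h : ∀ a, y * ι a = ι (σ a) * y + ι (d a)) (b : B) :
    b ∈ adj ι y ↔ ∃ f, b = powSum ι y f := by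
  constructor
  swap
  · rintro ⟨f, rfl⟩
    exact powSum_mem ι y f
  intro hb
  -- The span of the powers is stable under left multiplication by `A[y]`, and it contains `1`.
  have key : ∀ f, ∃ g, b * powSum ι y f = powSum ι y g := by
    induction hb using Algebra.adjoin_induction with
    | mem x hx =>
      intro f
      induction f using Finsupp.induction_linear with
      | zero => exact ⟨0, by simp⟩
      | add f₁ f₂ h₁ h₂ =>
        obtain ⟨g₁, h₁⟩ := h₁
        obtain ⟨g₂, h₂⟩ := h₂
        exact ⟨g₁ + g₂, by rw [map_add, map_add, mul_add, h₁, h₂]⟩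
      | single i a =>
        rcases hx with ⟨c, rfl⟩ | rfl
        · exact ⟨Finsupp.single i (c * a), by rw [powSum_single, powSum_single, map_mul, mul_assoc]⟩
        · refine ⟨Finsupp.single (i + 1) (σ a) + Finsupp.single i (d a), ?_⟩
          rw [map_add, powSum_single, powSum_single, powSum_single, ← mul_assoc, h, add_mul,
            mul_assoc, pow_succ']
    | algebraMap r =>
      intro f
      induction f using Finsupp.induction_linear with
      | zero => exact ⟨0, by simp⟩
      | add f₁ f₂ h₁ h₂ =>
        obtain ⟨g₁, h₁⟩ := h₁
        obtain ⟨g₂, h₂⟩ := h₂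
        exact ⟨g₁ + g₂, by rw [map_add, map_add, mul_add, h₁, h₂]⟩
      | single i a =>
        exact ⟨Finsupp.single i (algebraMap K A r * a), by
          rw [powSum_single, powSum_single, map_mul, AlgHom.commutes, mul_assoc]⟩
    | add x z _ _ hx hz =>
      intro f
      obtain ⟨g₁, h₁⟩ := hx f
      obtain ⟨g₂, h₂⟩ := hz f
      exact ⟨g₁ + g₂, by rw [map_add, add_mul, h₁, h₂]⟩
    | mul x z _ _ hx hz =>
      intro f
      obtain ⟨g₁, h₁⟩ := hz f
      obtain ⟨g₂, h₂⟩ := hx g₁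
      exact ⟨g₂, by rw [mul_assoc, h₁, h₂]⟩
  simpa using key (Finsupp.single 0 1)

/-! ### Regrouping coefficients -/

/-- The bijection `(aᵢ) ↦ ∑ aᵢ yⁱ` between coefficient families and `A[y]`, when `A[y]` is free
over `A` on the powers of `y`. -/
noncomputable def powEquiv (ι : A →ₐ[K] B) (y : B)
    (hs : ∀ b ∈ adj ι y, ∃ f, b = powSum ι y f) (hi : ∀ f, powSum ι y f = 0 → f = 0) :
    (ℕ →₀ A) ≃+ adj ι y :=
  AddEquiv.ofBijective
    ((powSum ι y).codRestrict (adj ι y) (powSum_mem ι y)) <| by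
      refine ⟨(injective_iff_map_eq_zero _).2 fun f hf => hi f (congrArg Subtype.val hf), ?_⟩
      rintro ⟨b, hb⟩
      obtain ⟨f, rfl⟩ := hs b hb
      exact ⟨f, rfl⟩

/-- The bijection `(aᵢⱼ) ↦ (∑ᵢ aᵢⱼ yⁱ)ⱼ`, when `A[y]` is free over `A` on the powers of `y`. -/
noncomputable def regroup (ι : A →ₐ[K] B) (y : B)
    (hs : ∀ b ∈ adj ι y, ∃ f, b = powSum ι y f) (hi : ∀ f, powSum ι y f = 0 → f = 0) :
    (ℕ × ℕ →₀ A) ≃+ (ℕ →₀ adj ι y) :=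
  ((Finsupp.domCongr (Equiv.prodComm ℕ ℕ)).trans Finsupp.curryAddEquiv).trans
    (Finsupp.mapRange.addEquiv (powEquiv ι y hs hi))

lemma dblSum_eq_iterSum (ι : A →ₐ[K] B) (y₁ y₂ : B)
    (hs : ∀ b ∈ adj ι y₁, ∃ f, b = powSum ι y₁ f) (hi : ∀ f, powSum ι y₁ f = 0 → f = 0)
    (f : ℕ × ℕ →₀ A) :
    dblSum ι y₁ y₂ f = iterSum (adj ι y₁) y₂ (regroup ι y₁ hs hi f) := by
  induction f using Finsupp.induction_linear with
  | zero => simp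
  | add f₁ f₂ h₁ h₂ => rw [map_add, map_add, map_add, h₁, h₂]
  | single ij a =>
    have h : regroup ι y₁ hs hi (Finsupp.single ij a)
        = Finsupp.single ij.2 (powEquiv ι y₁ hs hi (Finsupp.single ij.1 a)) := by
      simp [regroup, Finsupp.domCongr, Finsupp.curryAddEquiv]
    have h' : ((powEquiv ι y₁ hs hi (Finsupp.single ij.1 a) : adj ι y₁) : B)
        = powSum ι y₁ (Finsupp.single ij.1 a) := rfl
    rw [h, iterSum_single, h', dblSum_single, powSum_single, mul_assoc]

/-! ### Commutation rules -/

/-- If `y₂s ∈ A[y₁]y₂ + A[y₁]` for the generators `s` of `A[y₁]`, the same holds for every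
`s ∈ A[y₁]`. -/
lemma exists_mul_eq (ι : A →ₐ[K] B) (y₁ y₂ : B)
    (hA : ∀ a, ∃ s t : adj ι y₁, y₂ * ι a = s * y₂ + t)
    (hy : ∃ s t : adj ι y₁, y₂ * y₁ = s * y₂ + t) (b : B) (hb : b ∈ adj ι y₁) :
    ∃ s t : adj ι y₁, y₂ * b = s * y₂ + t := by
  induction hb using Algebra.adjoin_induction with
  | mem x hx =>
    rcases hx with ⟨a, rfl⟩ | rfl
    exacts [hA a, hy]
  | algebraMap r => exact ⟨algebraMap K _ r, 0, by simp [Algebra.commutes]⟩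
  | add x z _ _ hx hz =>
    obtain ⟨s, t, h⟩ := hx
    obtain ⟨s', t', h'⟩ := hz
    exact ⟨s + s', t + t', by rw [mul_add, h, h']; push_cast; noncomm_ring⟩
  | mul x z _ hz' hx hz =>
    obtain ⟨s, t, h⟩ := hx
    obtain ⟨s', t', h'⟩ := hz
    refine ⟨s * s', s * t' + t * ⟨z, hz'⟩, ?_⟩
    rw [← mul_assoc, h, add_mul, mul_assoc, h']
    push_cast
    noncomm_ring

/-- Uniqueness of the coefficients in `sy + t`, for `y` with powers independent over `S`. -/
lemma coeff_unique_s8 (S : Subalgebra K B) (y : B) (hi : ∀ g, iterSum S y g = 0 → g = 0)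
    (s t s' t' : S) (h : (s : B) * y + t = s' * y + t') : s = s' ∧ t = t' := by
  have h0 := hi (Finsupp.single 1 (s - s') + Finsupp.single 0 (t - t')) (by
    rw [map_add, iterSum_single, iterSum_single]
    push_cast
    rw [pow_one, pow_zero, mul_one, sub_mul, sub_add_sub_comm, h, sub_self])
  have h1 := DFunLike.congr_fun h0 1
  have h2 := DFunLike.congr_fun h0 0
  simp at h1 h2
  exact ⟨sub_eq_zero.1 h1, sub_eq_zero.1 h2⟩

/-- A right double extension in which `y₁a` also has the form `σ₁(a)y₁ + d₁(a)` satisfies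
`σ₁₂ = 0`, by comparing the coefficients of `y₂`. -/
lemma sigma_eq_zero (ι : A →ₐ[K] B) (y₁ y₂ : B) (σ₁₁ σ₁₂ δ₁ σ₁ d₁ : A → A)
    (hi : ∀ f, dblSum ι y₁ y₂ f = 0 → f = 0)
    (h : ∀ a, y₁ * ι a = ι (σ₁₁ a) * y₁ + ι (σ₁₂ a) * y₂ + ι (δ₁ a))
    (h' : ∀ a, y₁ * ι a = ι (σ₁ a) * y₁ + ι (d₁ a)) : σ₁₂ = fun _ => 0 := by
  funext a
  have h0 := hi (Finsupp.single (1, 0) (σ₁₁ a - σ₁ a) + Finsupp.single (0, 1) (σ₁₂ a)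
      + Finsupp.single (0, 0) (δ₁ a - d₁ a)) (by
    rw [map_add, map_add, dblSum_single, dblSum_single, dblSum_single]
    have e := (h a).symm.trans (h' a)
    simp only [pow_one, pow_zero, mul_one, one_mul, map_sub, sub_mul]
    rw [← sub_eq_zero] at e
    rw [← e]
    abel)
  simpa using DFunLike.congr_fun h0 (0, 1)

/-! ### Right double extensions and iterated Ore extensions -/

/-- A right double extension with `σ₁₂ = 0` is an iterated Ore extension with the prescribed values
of `σ₂` and `d₂` on `A` and `y₁`. -/
lemma rde_to_ore (ι : A →ₐ[K] B) (y₁ y₂ : B)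
    (p₁₂ p₁₁ : K) (τ₀ τ₁ τ₂ : A) (σ₁₁ σ₂₁ σ₂₂ δ₁ δ₂ : A → A)
    (H : IsRightDoubleExtension ι y₁ y₂ p₁₂ p₁₁ τ₀ τ₁ τ₂ σ₁₁ (fun _ => 0) σ₂₁ σ₂₂ δ₁ δ₂) :
    ∃ σ₂ d₂ : B → B,
        IsIteratedOreExtension ι y₁ y₂ σ₁₁ δ₁ σ₂ d₂ ∧
        (∀ a : A, σ₂ (ι a) = ι (σ₂₂ a)) ∧
        σ₂ y₁ = p₁₂ • y₁ + ι τ₂ ∧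
        (∀ a : A, d₂ (ι a) = ι (σ₂₁ a) * y₁ + ι (δ₂ a)) ∧
        d₂ y₁ = p₁₁ • (y₁ * y₁) + ι τ₁ * y₁ + ι τ₀ := by
  classical
  obtain ⟨hι, -, hrel, hs, hi, h1, h2⟩ := H
  have h1' : ∀ a, y₁ * ι a = ι (σ₁₁ a) * y₁ + ι (δ₁ a) := fun a => by simpa using h1 a
  have hps : ∀ b ∈ adj ι y₁, ∃ f, b = powSum ι y₁ f := fun b =>
    (mem_adjoin_iff ι y₁ σ₁₁ δ₁ h1' b).1
  have hpi : ∀ f, powSum ι y₁ f = 0 → f = 0 := by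
    intro f hf
    -- `∑ aᵢ y₁ⁱ` is the double sum supported on the column `j = 0`.
    have e : ∀ f, powSum ι y₁ f
        = dblSum ι y₁ y₂ (Finsupp.mapDomain (fun i => (i, 0)) f) := by
      intro f
      induction f using Finsupp.induction_linear with
      | zero => simp
      | add f₁ f₂ h₁ h₂ => rw [map_add, Finsupp.mapDomain_add, map_add, h₁, h₂]
      | single i a => simp [Finsupp.mapDomain_single]
    have h0 := hi _ ((e f).symm.trans hf)
    exact Finsupp.mapDomain_injective (fun i j h => (Prod.mk.inj h).1)
      (h0.trans Finsupp.mapDomain_zero.symm)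
  have hit : ∀ g, iterSum (adj ι y₁) y₂ g = 0 → g = 0 := by
    intro g hg
    obtain ⟨f, rfl⟩ := (regroup ι y₁ hps hpi).surjective g
    rw [← dblSum_eq_iterSum] at hg
    rw [hi f hg, map_zero]
  let y : adj ι y₁ := ⟨y₁, self_mem_adj ι y₁⟩
  let c : A → adj ι y₁ := fun a => ⟨ι a, mem_adj ι y₁ a⟩
  have hA : ∀ a, y₂ * ι a = (c (σ₂₂ a) : adj ι y₁) * y₂
      + ((c (σ₂₁ a) * y + c (δ₂ a) : adj ι y₁) : B) := fun a => by
    rw [h2 a]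
    push_cast
    simp only [c, y]
    abel
  have hy : y₂ * y₁ = ((p₁₂ • y + c τ₂ : adj ι y₁) : B) * y₂
      + ((p₁₁ • (y * y) + c τ₁ * y + c τ₀ : adj ι y₁) : B) := by
    rw [hrel]
    push_cast
    simp only [c, y, add_mul, smul_mul_assoc]
    abel
  have hex := exists_mul_eq ι y₁ y₂ (fun a => ⟨_, _, hA a⟩) ⟨_, _, hy⟩
  choose s t hst using hex
  -- Outside `A[y₁]` the values of `σ₂` and `d₂` are irrelevant; they are set to `0`.
  refine ⟨fun b => if hb : b ∈ adj ι y₁ then s b hb else 0,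
    fun b => if hb : b ∈ adj ι y₁ then t b hb else 0,
    ⟨hι, hps, hpi, h1', fun b hb => ?_, fun b => ?_, hit, fun b hb => ?_⟩,
    fun a => ?_, ?_, fun a => ?_, ?_⟩
  · simp only [dif_pos hb]
    exact ⟨(s b hb).2, (t b hb).2⟩
  · obtain ⟨f, hf⟩ := hs b
    exact ⟨regroup ι y₁ hps hpi f, hf.trans (dblSum_eq_iterSum ι y₁ y₂ hps hpi f)⟩
  · simp only [dif_pos hb]
    exact hst b hb
  · simp only [dif_pos (mem_adj ι y₁ a)]
    exact congrArg Subtype.val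
      (coeff_unique_s8 _ _ hit _ _ _ _ ((hst _ (mem_adj ι y₁ a)).symm.trans (hA a))).1
  · simp only [dif_pos (self_mem_adj ι y₁)]
    exact congrArg Subtype.val
      (coeff_unique_s8 _ _ hit _ _ _ _ ((hst _ (self_mem_adj ι y₁)).symm.trans hy)).1
  · simp only [dif_pos (mem_adj ι y₁ a)]
    exact congrArg Subtype.val
      (coeff_unique_s8 _ _ hit _ _ _ _ ((hst _ (mem_adj ι y₁ a)).symm.trans (hA a))).2
  · simp only [dif_pos (self_mem_adj ι y₁)]
    exact congrArg Subtype.val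
      (coeff_unique_s8 _ _ hit _ _ _ _ ((hst _ (self_mem_adj ι y₁)).symm.trans hy)).2

/-- An iterated Ore extension with the prescribed values of `σ₂` and `d₂` on `A` and `y₁` is a right
double extension with `σ₁₂ = 0`. -/
lemma ore_to_rde (ι : A →ₐ[K] B) (y₁ y₂ : B)
    (p₁₂ p₁₁ : K) (τ₀ τ₁ τ₂ : A) (σ₁₁ σ₂₁ σ₂₂ δ₁ δ₂ : A → A) (σ₂ d₂ : B → B)
    (H : IsIteratedOreExtension ι y₁ y₂ σ₁₁ δ₁ σ₂ d₂)
    (hσA : ∀ a : A, σ₂ (ι a) = ι (σ₂₂ a))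
    (hσy : σ₂ y₁ = p₁₂ • y₁ + ι τ₂)
    (hdA : ∀ a : A, d₂ (ι a) = ι (σ₂₁ a) * y₁ + ι (δ₂ a))
    (hdy : d₂ y₁ = p₁₁ • (y₁ * y₁) + ι τ₁ * y₁ + ι τ₀) :
    IsRightDoubleExtension ι y₁ y₂ p₁₂ p₁₁ τ₀ τ₁ τ₂ σ₁₁ (fun _ => 0) σ₂₁ σ₂₂ δ₁ δ₂ := by
  obtain ⟨hι, hps, hpi, h1, -, hs, hi, h2⟩ := H
  have hds : ∀ b, ∃ f, b = dblSum ι y₁ y₂ f := by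
    intro b
    obtain ⟨g, hg⟩ := hs b
    obtain ⟨f, rfl⟩ := (regroup ι y₁ hps hpi).surjective g
    exact ⟨f, hg.trans (dblSum_eq_iterSum ι y₁ y₂ hps hpi f).symm⟩
  refine ⟨hι, ?_, ?_, hds, fun f hf => ?_, fun a => by simpa using h1 a, fun a => ?_⟩
  · rw [eq_top_iff]
    rintro b -
    obtain ⟨f, rfl⟩ := hds b
    have hm : ∀ x ∈ Set.range ι ∪ {y₁, y₂}, x ∈ Algebra.adjoin K (Set.range ι ∪ {y₁, y₂}) :=
      fun x hx => Algebra.subset_adjoin hx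
    exact Subalgebra.sum_mem _ fun ij _ => Subalgebra.mul_mem _ (hm _ (by simp))
      (Subalgebra.mul_mem _ (Subalgebra.pow_mem _ (hm y₁ (by simp)) _)
        (Subalgebra.pow_mem _ (hm y₂ (by simp)) _))
  · rw [h2 y₁ (self_mem_adj ι y₁), hσy, hdy, add_mul, smul_mul_assoc]
    abel
  · have hf' : dblSum ι y₁ y₂ f = 0 := hf
    rw [dblSum_eq_iterSum ι y₁ y₂ hps hpi] at hf'
    exact (map_eq_zero_iff _ (regroup ι y₁ hps hpi).injective).1 (hi _ hf')
  · rw [h2 (ι a) (mem_adj ι y₁ a), hσA, hdA]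
    abel

end Aux

/-- **Theorem (DOasO, part (a)).** Let `A, B` be `K`-algebras with `B` an extension of
`A` (via the injective `ι`), `P = {p₁₂,p₁₁} ⊆ K`, `τ = {τ₀,τ₁,τ₂} ⊆ A`, `σ` an algebra
homomorphism `A → M₂ₓ₂(A)` and `δ` a `σ`-derivation `A → M₂ₓ₁(A)`. The following are
equivalent:
(i) `B = A_P[y₁,y₂;σ,δ,τ]` is a right double extension of `A` which can be presented as
an iterated Ore extension `A[y₁;σ₁,d₁][y₂;σ₂,d₂]` (with the same `y₁`, `y₂`);
(ii) `B = A_P[y₁,y₂;σ,δ,τ]` is a right double extension of `A` with `σ₁₂ = 0`;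
(iii) `B = A[y₁;σ₁,d₁][y₂;σ₂,d₂]` is an iterated Ore extension such that `σ₂(A) ⊆ A`,
`σ₂(y₁) = p₁₂y₁ + τ₂`, `d₂(A) ⊆ Ay₁ + A` and `d₂(y₁) = p₁₁y₁² + τ₁y₁ + τ₀`, the data
being related by `σ = [[σ₁,0],[σ₂₁,σ₂|_A]]` and `δ(a) = [d₁(a); d₂(a) − σ₂₁(a)y₁]`,
i.e. `σ₁ = σ₁₁`, `d₁ = δ₁`, `σ₁₂ = 0`, `σ₂ ∘ ι = ι ∘ σ₂₂` and
`d₂(a) = σ₂₁(a)y₁ + δ₂(a)` for all `a ∈ A`. -/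
theorem rightDoubleExtension_iff_iteratedOre
    {K A B : Type*} [Field K] [Ring A] [Algebra K A] [Ring B] [Algebra K B]
    (ι : A →ₐ[K] B) (hι : Function.Injective ι) (y₁ y₂ : B)
    (p₁₂ p₁₁ : K) (τ₀ τ₁ τ₂ : A) (σ₁₁ σ₁₂ σ₂₁ σ₂₂ δ₁ δ₂ : A → A)
    (hσ : IsSigmaAlgHom K σ₁₁ σ₁₂ σ₂₁ σ₂₂)
    (hδ : IsSigmaDerivation K σ₁₁ σ₁₂ σ₂₁ σ₂₂ δ₁ δ₂) :
    -- (i) ↔ (ii)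
    ((IsRightDoubleExtension ι y₁ y₂ p₁₂ p₁₁ τ₀ τ₁ τ₂ σ₁₁ σ₁₂ σ₂₁ σ₂₂ δ₁ δ₂ ∧
        ∃ (σ₁ d₁ : A → A) (σ₂ d₂ : B → B),
          IsIteratedOreExtension ι y₁ y₂ σ₁ d₁ σ₂ d₂) ↔
      (IsRightDoubleExtension ι y₁ y₂ p₁₂ p₁₁ τ₀ τ₁ τ₂ σ₁₁ σ₁₂ σ₂₁ σ₂₂ δ₁ δ₂ ∧
        σ₁₂ = fun _ => 0)) ∧
    -- (ii) ↔ (iii)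
    ((IsRightDoubleExtension ι y₁ y₂ p₁₂ p₁₁ τ₀ τ₁ τ₂ σ₁₁ σ₁₂ σ₂₁ σ₂₂ δ₁ δ₂ ∧
        σ₁₂ = fun _ => 0) ↔
      (∃ σ₂ d₂ : B → B,
        IsIteratedOreExtension ι y₁ y₂ σ₁₁ δ₁ σ₂ d₂ ∧
        σ₁₂ = (fun _ => 0) ∧
        (∀ a : A, σ₂ (ι a) = ι (σ₂₂ a)) ∧
        σ₂ y₁ = p₁₂ • y₁ + ι τ₂ ∧
        (∀ a : A, d₂ (ι a) = ι (σ₂₁ a) * y₁ + ι (δ₂ a)) ∧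
        d₂ y₁ = p₁₁ • (y₁ * y₁) + ι τ₁ * y₁ + ι τ₀)) := by
  refine ⟨⟨?_, ?_⟩, ⟨?_, ?_⟩⟩
  · rintro ⟨H, σ₁, d₁, σ₂, d₂, H'⟩
    obtain ⟨-, -, -, -, hi, h1, -⟩ := id H
    obtain ⟨-, -, -, h1', -⟩ := H'
    exact ⟨H, sigma_eq_zero ι y₁ y₂ σ₁₁ σ₁₂ δ₁ σ₁ d₁ hi h1 h1'⟩
  · rintro ⟨H, rfl⟩
    obtain ⟨σ₂, d₂, H', -⟩ := rde_to_ore ι y₁ y₂ p₁₂ p₁₁ τ₀ τ₁ τ₂ σ₁₁ σ₂₁ σ₂₂ δ₁ δ₂ H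
    exact ⟨H, σ₁₁, δ₁, σ₂, d₂, H'⟩
  · rintro ⟨H, rfl⟩
    obtain ⟨σ₂, d₂, H', h⟩ := rde_to_ore ι y₁ y₂ p₁₂ p₁₁ τ₀ τ₁ τ₂ σ₁₁ σ₂₁ σ₂₂ δ₁ δ₂ H
    exact ⟨σ₂, d₂, H', rfl, h⟩
  · rintro ⟨σ₂, d₂, H, rfl, hσA, hσy, hdA, hdy⟩
    exact ⟨ore_to_rde ι y₁ y₂ p₁₂ p₁₁ τ₀ τ₁ τ₂ σ₁₁ σ₂₁ σ₂₂ δ₁ δ₂ σ₂ d₂ H hσA hσy hdA hdy,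
      rfl⟩
end

section
/- Let B = A_P[y₁,y₂;σ,δ,τ] be a right double extension of a K-algebra A, let k, l ∈ K and let z = ky₁ + ly₂ ∈ B be nonzero. Then zA ⊆ Az + A if and only if kl·σ₁₁ + l²·σ₂₁ = kl·σ₂₂ + k²·σ₁₂ as maps from A to A. -/
/-!
Write `u = kσ₁₁(a) + lσ₂₁(a)` and `v = kσ₁₂(a) + lσ₂₂(a)`. The commutation rules give
`za ∈ uy₁ + vy₂ + A`, while `bz = (kb)y₁ + (lb)y₂`. Since `1, y₁, y₂` are left linearly
independent over `A` (`coeff_eq_zero_of_linear_combination_eq_zero`), `za ∈ Az + A` means that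
`u = kb` and `v = lb` for some `b ∈ A`. As `(k, l) ≠ (0, 0)`, such a `b` exists exactly when
`lu = kv` (`exists_smul_eq_and_smul_eq_iff`), which is the asserted identity at `a`.
-/

theorem coeff_eq_zero_of_linear_combination_eq_zero
    {K A B : Type*} [Field K] [Ring A] [Algebra K A] [Ring B] [Algebra K B]
    (ι : A →ₐ[K] B) (y₁ y₂ : B)
    (hfree : ∀ f : (ℕ × ℕ) →₀ A,
      (f.sum fun ij a => ι a * (y₁ ^ ij.1 * y₂ ^ ij.2)) = 0 → f = 0)
    (u v w : A) (h : ι u * y₁ + ι v * y₂ + ι w = 0) : u = 0 ∧ v = 0 := by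
  have hf := hfree (Finsupp.single (1, 0) u + Finsupp.single (0, 1) v + Finsupp.single (0, 0) w)
    (by
      rw [Finsupp.sum_add_index' (by simp) (by simp [add_mul]),
        Finsupp.sum_add_index' (by simp) (by simp [add_mul])]
      simpa using h)
  have h₁ := DFunLike.congr_fun hf (1, 0)
  have h₂ := DFunLike.congr_fun hf (0, 1)
  exact ⟨by simpa using h₁, by simpa using h₂⟩

/-- A pair `(u, v)` is a multiple of a nonzero pair of scalars `(k, l)` exactly when the
`2 × 2` determinant vanishes. -/
theorem exists_smul_eq_and_smul_eq_iff {K M : Type*} [Field K] [AddCommGroup M] [Module K M]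
    (k l : K) (hkl : k ≠ 0 ∨ l ≠ 0) (u v : M) :
    (∃ b : M, u = k • b ∧ v = l • b) ↔ l • u = k • v := by
  constructor
  · rintro ⟨b, rfl, rfl⟩
    exact smul_comm l k b
  · intro h
    rcases hkl with hk | hl
    · exact ⟨k⁻¹ • u, (smul_inv_smul₀ hk u).symm, by
        rw [smul_comm, h, inv_smul_smul₀ hk]⟩
    · exact ⟨l⁻¹ • v, by rw [smul_comm, ← h, inv_smul_smul₀ hl],
        (smul_inv_smul₀ hl v).symm⟩


/-!
Common definitions for formalizing "Double Ore Extensions versus Iterated Ore Extensions"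
(Carvalho, Lopes, Matczuk).

We model an extension `B` of a `K`-algebra `A` via an injective algebra map `ι : A →ₐ[K] B`.
-/

universe u v

/-- **Lemma (diagonalizavel).** Let `B = A_P[y₁,y₂;σ,δ,τ]` be a right double extension,
`k, l ∈ K` and `0 ≠ z = ky₁ + ly₂ ∈ B`. Then `zA ⊆ Az + A` if and only if
`klσ₁₁ + l²σ₂₁ = klσ₂₂ + k²σ₁₂`. -/
theorem smul_combination_normalizes_iff
    {K A B : Type*} [Field K] [Ring A] [Algebra K A] [Ring B] [Algebra K B]
    (ι : A →ₐ[K] B) (y₁ y₂ : B)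
    (p₁₂ p₁₁ : K) (τ₀ τ₁ τ₂ : A) (σ₁₁ σ₁₂ σ₂₁ σ₂₂ δ₁ δ₂ : A → A)
    (hB : IsRightDoubleExtension ι y₁ y₂ p₁₂ p₁₁ τ₀ τ₁ τ₂ σ₁₁ σ₁₂ σ₂₁ σ₂₂ δ₁ δ₂)
    (k l : K) (z : B) (hz : z = k • y₁ + l • y₂) (hz0 : z ≠ 0) :
    (∀ a : A, ∃ b c : A, z * ι a = ι b * z + ι c) ↔
      (∀ a : A, (k * l) • σ₁₁ a + (l * l) • σ₂₁ a =
        (k * l) • σ₂₂ a + (k * k) • σ₁₂ a) := by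
  obtain ⟨-, -, -, -, hfree, hy₁, hy₂⟩ := hB
  have hkl : k ≠ 0 ∨ l ≠ 0 := by
    by_contra! h
    exact hz0 (by simp [hz, h.1, h.2])
  refine forall_congr' fun a => ?_
  have hza : z * ι a = ι (k • σ₁₁ a + l • σ₂₁ a) * y₁ + ι (k • σ₁₂ a + l • σ₂₂ a) * y₂ +
      ι (k • δ₁ a + l • δ₂ a) := by
    simp only [hz, add_mul, smul_mul_assoc, hy₁, hy₂, map_add, map_smul, smul_add]
    abel
  have hbz (b : A) : ι b * z = ι (k • b) * y₁ + ι (l • b) * y₂ := by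
    simp only [hz, mul_add, mul_smul_comm, map_smul, smul_mul_assoc]
  have hdet : l • (k • σ₁₁ a + l • σ₂₁ a) = k • (k • σ₁₂ a + l • σ₂₂ a) ↔
      (k * l) • σ₁₁ a + (l * l) • σ₂₁ a = (k * l) • σ₂₂ a + (k * k) • σ₁₂ a := by
    rw [smul_add, smul_add, smul_smul, smul_smul, smul_smul, smul_smul, mul_comm l k,
      add_comm ((k * k) • σ₁₂ a)]
  rw [← hdet, ← exists_smul_eq_and_smul_eq_iff k l hkl]
  refine exists_congr fun b => ?_
  rw [hza, hbz]
  constructor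
  · rintro ⟨c, hc⟩
    obtain ⟨hu, hv⟩ := coeff_eq_zero_of_linear_combination_eq_zero ι y₁ y₂ hfree
      (k • σ₁₁ a + l • σ₂₁ a - k • b) (k • σ₁₂ a + l • σ₂₂ a - l • b)
      (k • δ₁ a + l • δ₂ a - c) (by
        rw [map_sub ι, map_sub ι, map_sub ι, sub_mul, sub_mul, ← sub_eq_zero.mpr hc]
        abel)
    exact ⟨sub_eq_zero.mp hu, sub_eq_zero.mp hv⟩
  · rintro ⟨hu, hv⟩
    exact ⟨k • δ₁ a + l • δ₂ a, by rw [hu, hv]⟩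
end

section
/- Let A be a K-algebra (K a field), σ an algebra endomorphism of A and d a σ-derivation of A, and let R = A[x;σ,d] be the Ore extension. Then the following are equivalent: (i) R is a free right A-module with basis {xⁱ : i ≥ 0}; (ii) σ is an automorphism of A; (iii) σ is injective and xA + A = Ax + A. -/
/-!
Left freeness gives every `r : R` additive coefficients `coeff r : ℕ →₀ A`, and the relation
`x a = σ(a) x + d(a)` turns into the recursion
`coeff (x r) (n + 1) = σ (coeff r n) + d (coeff r (n + 1))`. Hence `xⁿ a` has degree at most `n`,
with coefficient `σⁿ(a)` in degree `n` (`coeff_pow_mul`).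

For injective `σ`, a right polynomial `∑ xⁱ bᵢ` therefore has the same degree as its rewriting with
coefficients on the left (`right_coeff_eq_zero`). This gives right independence of the powers of
`x`; it also shows that if `a x = ∑ xⁱ bᵢ`, then `bᵢ = 0` for `i > 1`, and comparing coefficients
in degree `1` gives `a = σ(b₁)`, so right spanning forces `σ` to be surjective. Injectivity of `σ`
follows from right independence, since `σ(a) = 0` means `x a - d(a) = 0`. Conversely, if `σ` is
bijective, then `σ(b) x = x b - d(b)` moves all coefficients to the right, so the powers of `x` span
`R` as a right module, and it gives `xA + A = Ax + A`. Finally, if `a x = x b + c`, then `a = σ(b)`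
by comparing coefficients in degree `1`, so (iii) implies surjectivity.
-/

/-!
Common definitions for formalizing "Double Ore Extensions versus Iterated Ore Extensions"
(Carvalho, Lopes, Matczuk).

We model an extension `B` of a `K`-algebra `A` via an injective algebra map `ι : A →ₐ[K] B`.
-/

universe u v

namespace OreAux

variable {K A R : Type*} [Field K] [Ring A] [Algebra K A] [Ring R] [Algebra K R]

/-- The left polynomial `∑ ι(fᵢ) xⁱ`, additively in `f`. -/
noncomputable def lsum (ι : A →ₐ[K] R) (x : R) : (ℕ →₀ A) →+ R :=
  Finsupp.liftAddHom fun i => (AddMonoidHom.mulRight (x ^ i)).comp (ι : A →+ R)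

/-- The right polynomial `∑ xⁱ ι(fᵢ)`, additively in `f`. -/
noncomputable def rsum (ι : A →ₐ[K] R) (x : R) : (ℕ →₀ A) →+ R :=
  Finsupp.liftAddHom fun i => (AddMonoidHom.mulLeft (x ^ i)).comp (ι : A →+ R)

lemma lsum_apply (ι : A →ₐ[K] R) (x : R) (f : ℕ →₀ A) :
    lsum ι x f = f.sum fun i a => ι a * x ^ i := rfl

lemma rsum_apply (ι : A →ₐ[K] R) (x : R) (f : ℕ →₀ A) :
    rsum ι x f = f.sum fun i a => x ^ i * ι a := rfl

lemma lsum_single (ι : A →ₐ[K] R) (x : R) (n : ℕ) (a : A) :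
    lsum ι x (Finsupp.single n a) = ι a * x ^ n := by
  rw [lsum_apply, Finsupp.sum_single_index]; simp

lemma rsum_single (ι : A →ₐ[K] R) (x : R) (n : ℕ) (a : A) :
    rsum ι x (Finsupp.single n a) = x ^ n * ι a := by
  rw [rsum_apply, Finsupp.sum_single_index]; simp

/-- Left freeness as an additive equivalence between polynomials and `R`. -/
noncomputable def lequiv {ι : A →ₐ[K] R} {x : R} {σ d : A → A}
    (h : IsOreExtension ι x σ d) : (ℕ →₀ A) ≃+ R :=
  AddEquiv.ofBijective (lsum ι x)
    ⟨(injective_iff_map_eq_zero _).2 h.2.2.1, fun r => (h.2.1 r).imp fun _ hf => hf.symm⟩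

/-- The coefficients `aᵢ` of an element `∑ ι(aᵢ) xⁱ` of an Ore extension. -/
noncomputable def coeff {ι : A →ₐ[K] R} {x : R} {σ d : A → A}
    (h : IsOreExtension ι x σ d) : R →+ (ℕ →₀ A) :=
  (lequiv h).symm

lemma coeff_lsum {ι : A →ₐ[K] R} {x : R} {σ d : A → A}
    (h : IsOreExtension ι x σ d) (f : ℕ →₀ A) : coeff h (lsum ι x f) = f :=
  (lequiv h).symm_apply_apply f

lemma coeff_monomial {ι : A →ₐ[K] R} {x : R} {σ d : A → A}
    (h : IsOreExtension ι x σ d) (n : ℕ) (a : A) :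
    coeff h (ι a * x ^ n) = Finsupp.single n a := by
  rw [← lsum_single, coeff_lsum]

lemma coeff_const {ι : A →ₐ[K] R} {x : R} {σ d : A → A}
    (h : IsOreExtension ι x σ d) (a : A) : coeff h (ι a) = Finsupp.single 0 a := by
  simpa using coeff_monomial h 0 a

lemma coeff_linear {ι : A →ₐ[K] R} {x : R} {σ d : A → A}
    (h : IsOreExtension ι x σ d) (a : A) : coeff h (ι a * x) = Finsupp.single 1 a := by
  simpa using coeff_monomial h 1 a

lemma coeff_x_mul {ι : A →ₐ[K] R} {x : R} {σ : A →ₐ[K] A} {d : A →+ A}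
    (h : IsOreExtension ι x σ d) (r : R) (n : ℕ) :
    coeff h (x * r) (n + 1) = σ (coeff h r n) + d (coeff h r (n + 1)) := by
  obtain ⟨f, rfl⟩ := (lequiv h).surjective r
  change coeff h (x * lsum ι x f) (n + 1) = σ (coeff h (lsum ι x f) n) +
    d (coeff h (lsum ι x f) (n + 1))
  induction f using Finsupp.induction_linear with
  | zero => simp
  | add f g hf hg =>
    simp only [map_add, mul_add, Finsupp.add_apply, hf, hg]
    abel
  | single i a =>
    have e : x * (ι a * x ^ i) = ι (σ a) * x ^ (i + 1) + ι (d a) * x ^ i := by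
      rw [← mul_assoc, h.2.2.2 a, add_mul, mul_assoc, ← pow_succ']
    rw [lsum_single, e, map_add (coeff h), coeff_monomial, coeff_monomial, coeff_monomial]
    simp only [Finsupp.add_apply, Finsupp.single_apply, Nat.add_right_cancel_iff, apply_ite σ,
      apply_ite d, map_zero]

/-- `xⁿ a` equals `σⁿ(a) xⁿ` up to terms of lower degree. -/
lemma coeff_pow_mul {ι : A →ₐ[K] R} {x : R} {σ : A →ₐ[K] A} {d : A →+ A}
    (h : IsOreExtension ι x σ d) (a : A) (n : ℕ) :
    coeff h (x ^ n * ι a) n = σ^[n] a ∧ ∀ j, n < j → coeff h (x ^ n * ι a) j = 0 := by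
  induction n with
  | zero =>
    rw [pow_zero, one_mul, coeff_const]
    exact ⟨by simp, fun j hj => Finsupp.single_eq_of_ne hj.ne'⟩
  | succ n ih =>
    rw [pow_succ', mul_assoc]
    refine ⟨?_, fun j hj => ?_⟩
    · rw [coeff_x_mul, ih.1, ih.2 _ n.lt_succ_self, map_zero, add_zero,
        Function.iterate_succ_apply']
    · obtain ⟨k, rfl⟩ : ∃ k, j = k + 1 := ⟨j - 1, by omega⟩
      rw [coeff_x_mul, ih.2 k (by omega), ih.2 (k + 1) (by omega), map_zero, map_zero, add_zero]

lemma coeff_rsum_top {ι : A →ₐ[K] R} {x : R} {σ : A →ₐ[K] A} {d : A →+ A}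
    (h : IsOreExtension ι x σ d) (g : ℕ →₀ A) (N : ℕ) (hN : ∀ i, N < i → g i = 0) :
    coeff h (rsum ι x g) N = σ^[N] (g N) := by
  rw [rsum_apply, Finsupp.sum, map_sum, Finsupp.finsetSum_apply,
    Finset.sum_eq_single N, (coeff_pow_mul h _ N).1]
  · intro i hi hne
    rcases lt_or_gt_of_ne hne with hlt | hgt
    · exact (coeff_pow_mul h _ i).2 N hlt
    · exact absurd (hN i hgt) (Finsupp.mem_support_iff.1 hi)
  · intro hn
    rw [Finsupp.notMem_support_iff.1 hn]
    simp

/-- For injective `σ`, the degree of `∑ xⁱ gᵢ` as a right polynomial is at most its degree as a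
left polynomial. -/
lemma right_coeff_eq_zero {ι : A →ₐ[K] R} {x : R} {σ : A →ₐ[K] A} {d : A →+ A}
    (h : IsOreExtension ι x σ d) (hσ : Function.Injective σ) (g : ℕ →₀ A) (m : ℕ)
    (hm : ∀ j, m ≤ j → coeff h (rsum ι x g) j = 0) (j : ℕ) (hj : m ≤ j) : g j = 0 := by
  by_contra hne
  have hjs : j ∈ g.support := Finsupp.mem_support_iff.2 hne
  obtain ⟨N, hNs, hmax⟩ := g.support.exists_max_image id ⟨j, hjs⟩
  have htop := coeff_rsum_top h g N fun i hi => by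
    by_contra hgi
    exact absurd (hmax i (Finsupp.mem_support_iff.2 hgi)) (not_le.2 hi)
  rw [hm N (hj.trans (hmax j hjs))] at htop
  refine Finsupp.mem_support_iff.1 hNs (hσ.iterate N ?_)
  rw [← htop, iterate_map_zero]

/-- For surjective `σ`, the powers of `x` span `R` as a right `A`-module. -/
lemma rsum_surjective {ι : A →ₐ[K] R} {x : R} {σ d : A → A}
    (h : IsOreExtension ι x σ d) (hσ : Function.Surjective σ) (r : R) :
    r ∈ (rsum ι x).range := by
  have hx : ∀ s ∈ (rsum ι x).range, x * s ∈ (rsum ι x).range := by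
    rintro _ ⟨f, rfl⟩
    induction f using Finsupp.induction_linear with
    | zero => simp
    | add f g hf hg => rw [map_add, mul_add]; exact add_mem hf hg
    | single i a =>
      exact ⟨Finsupp.single (i + 1) a, by rw [rsum_single, rsum_single, pow_succ', mul_assoc]⟩
  have hmon : ∀ (n : ℕ) (a : A), ι a * x ^ n ∈ (rsum ι x).range := by
    intro n
    induction n with
    | zero => exact fun a => ⟨Finsupp.single 0 a, by simp [rsum_single]⟩
    | succ n ih =>
      intro a
      obtain ⟨b, rfl⟩ := hσ a
      have e : ι (σ b) * x ^ (n + 1) = x * (ι b * x ^ n) - ι (d b) * x ^ n := by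
        rw [← mul_assoc, h.2.2.2 b, add_mul, mul_assoc, ← pow_succ', add_sub_cancel_right]
      rw [e]
      exact sub_mem (hx _ (ih b)) (ih _)
  obtain ⟨f, rfl⟩ := h.2.1 r
  exact sum_mem fun i _ => hmon i (f i)

end OreAux

open OreAux in
/-- **Ore extension basics.** Let `A` be a `K`-algebra, `σ` an algebra endomorphism of
`A`, `d` a `σ`-derivation of `A` and `R = A[x;σ,d]` the Ore extension. The following are
equivalent: (i) `R` is a free right `A`-module with basis `{xⁱ}`; (ii) `σ` is an
automorphism of `A`; (iii) `σ` is injective and `xA + A = Ax + A`. -/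
theorem oreExtension_free_right_iff_sigma_automorphism
    {K A R : Type*} [Field K] [Ring A] [Algebra K A] [Ring R] [Algebra K R]
    (ι : A →ₐ[K] R) (x : R) (σ : A →ₐ[K] A) (d : A → A)
    (hd : ∀ a b : A, d (a * b) = σ a * d b + d a * b)
    (hdlin : ∀ (k : K) (a b : A), d (k • a + b) = k • d a + d b)
    (h : IsOreExtension ι x (⇑σ) d) :
    ((∀ r : R, ∃ f : ℕ →₀ A, r = f.sum fun i a => x ^ i * ι a) ∧
      (∀ f : ℕ →₀ A, (f.sum fun i a => x ^ i * ι a) = 0 → f = 0) ↔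
        Function.Bijective σ) ∧
    (Function.Bijective σ ↔
      (Function.Injective σ ∧
        {w : R | ∃ a b : A, w = x * ι a + ι b} =
          {w : R | ∃ a b : A, w = ι a * x + ι b})) := by
  obtain ⟨d, rfl⟩ : ∃ d' : A →+ A, d = d' :=
    ⟨AddMonoidHom.mk' d fun a b => by simpa using hdlin 1 a b, rfl⟩
  have hrel : ∀ a : A, x * ι a = ι (σ a) * x + ι (d a) := h.2.2.2
  refine ⟨⟨fun ⟨hspan, hind⟩ => ?_, fun hσ => ⟨fun r => ?_, fun f hf => ?_⟩⟩,
    fun hσ => ⟨hσ.1, ?_⟩, fun ⟨hinj, hset⟩ => ⟨hinj, fun a => ?_⟩⟩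
  · have hinj : Function.Injective σ := by
      refine (injective_iff_map_eq_zero σ).2 fun a ha => ?_
      -- `σ(a) = 0` makes `x a - d(a)` a vanishing right polynomial with coefficient `a` at `x`.
      have h0 := hind (Finsupp.single 1 a - Finsupp.single 0 (d a)) (by
        rw [← rsum_apply, map_sub, rsum_single, rsum_single, pow_one, pow_zero, one_mul, hrel,
          ha, map_zero, zero_mul, zero_add, sub_self])
      simpa using DFunLike.congr_fun h0 1
    refine ⟨hinj, fun a => ?_⟩
    obtain ⟨g, hg⟩ := hspan (ι a * x)
    rw [← rsum_apply] at hg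
    have hdeg := right_coeff_eq_zero h hinj g 2 fun j hj => by
      rw [← hg, coeff_linear]
      exact Finsupp.single_eq_of_ne (by omega)
    have htop := coeff_rsum_top h g 1 fun i hi => hdeg i hi
    rw [← hg, coeff_linear, Finsupp.single_eq_same] at htop
    exact ⟨g 1, htop.symm⟩
  · obtain ⟨f, hf⟩ := rsum_surjective h hσ.2 r
    exact ⟨f, hf.symm⟩
  · ext j
    refine right_coeff_eq_zero h hσ.1 f 0 (fun i _ => ?_) j j.zero_le
    rw [rsum_apply, hf, map_zero, Finsupp.zero_apply]
  · ext w
    constructor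
    · rintro ⟨a, b, rfl⟩
      exact ⟨σ a, d a + b, by rw [hrel, map_add, add_assoc]⟩
    · rintro ⟨a, b, rfl⟩
      obtain ⟨c, rfl⟩ := hσ.2 a
      exact ⟨c, b - d c, by rw [hrel, map_sub]; abel⟩
  · obtain ⟨b, c, hbc⟩ : ι a * x ∈ {w : R | ∃ a b : A, w = x * ι a + ι b} := by
      rw [hset]
      exact ⟨a, 0, by simp⟩
    have h1 := DFunLike.congr_fun (congrArg (coeff h) hbc) 1
    rw [hrel, map_add, map_add, coeff_linear, coeff_linear, coeff_const, coeff_const] at h1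
    exact ⟨b, by simpa using h1.symm⟩
end
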